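/- arXiv:math/0309074 — 3 statements merged into one kernel-verified Lean document; each statement's English description precedes it below -/
import Mathlib

section
/- (McMahon's identity) For every real q with 0 ≤ q < 1, the sum of q^{|π|} over all plane partitions π equals ∏_{n≥1} (1 − q^n)^{−n}; in particular, for 0 < q < 1 the assignment π ↦ q^{|π|} ∏_{n≥1} (1 − q^n)^{n} defines a probability measure on the set of plane partitions. -/
open Filter Topology
open scoped Classical

/-- A plane partition: an array `(π_{ij})_{i,j ≥ 1}` of nonnegative integers,
nonincreasing in `i` and in `j`, with finitely many nonzero entries.
`part i j` is the entry `π_{i+1, j+1}`. -/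
structure PlanePartition : Type where
  part : ℕ → ℕ → ℕ
  antitone_fst : ∀ ⦃i i' : ℕ⦄ (j : ℕ), i ≤ i' → part i' j ≤ part i j
  antitone_snd : ∀ (i : ℕ) ⦃j j' : ℕ⦄, j ≤ j' → part i j' ≤ part i j
  finite_support : (Function.support fun p : ℕ × ℕ => part p.1 p.2).Finite

/-- The volume `|π| = Σ_{i,j} π_{ij}` of a plane partition. -/
noncomputable def PlanePartition.size (π : PlanePartition) : ℕ :=
  ∑' p : ℕ × ℕ, π.part p.1 p.2

/-!
Along the diagonals, a plane partition with at most `m` rows and `n` columns is a pair of chains of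
interlacing partitions of lengths `m` and `n` that start at the main diagonal and end at the empty
partition. Weighting such chains by monomials in `x₀, …, xₘ₋₁` and `y₀, …, yₙ₋₁` produces the sum
`∑ s_κ(x) s_κ(y)` over the main diagonal `κ`, which is `∏ (1 - xᵢ yⱼ)⁻¹` by Cauchy's identity.

Cauchy's identity follows from the commutation relation of the operators that add and remove a
horizontal strip. That relation is bijective: given `μ` and `ν`, the common upper neighbours `κ` and
the common lower neighbours `ρ` are both described by independent choices from the intervals
`[max(μᵢ₊₁, νᵢ₊₁), min(μᵢ, νᵢ)]`, except that `κ₀ ≥ max(μ₀, ν₀)` is unbounded above, which accounts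
for the geometric series `(1 - x y)⁻¹`.

At `xᵢ = qⁱ⁺¹` and `yⱼ = qʲ` the monomial of a plane partition is `q ^ |π|`, so that the partitions
in an `m × n` box have generating function `∏ (1 - q ^ (i + j + 1))⁻¹`. As the box grows, the factor
`1 - qⁿ` occurs once for each of the `n` pairs with `i + j + 1 = n`. The sums are taken in `ℝ≥0∞`,
where rearranging them needs no summability.
-/

open scoped ENNReal

/-! ### Interlacing partitions and the local rule -/

/-- An integer partition `κ₀ ≥ κ₁ ≥ ⋯`, encoded as the sequence of its parts padded with zeros. -/
@[ext]
structure IntPartition : Type where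
  part : ℕ → ℕ
  antitone : Antitone part
  exists_part_eq_zero : ∃ n, part n = 0

namespace IntPartition

variable {κ μ ν ρ : IntPartition}

/-- The empty partition. -/
instance : Zero IntPartition := ⟨⟨0, antitone_const, 0, rfl⟩⟩

@[simp]
lemma zero_part (i : ℕ) : (0 : IntPartition).part i = 0 := rfl

lemma part_eq_zero_of_le {m n : ℕ} (hm : κ.part m = 0) (hmn : m ≤ n) : κ.part n = 0 :=
  Nat.eq_zero_of_le_zero (hm ▸ κ.antitone hmn)

lemma eq_zero_iff : κ = 0 ↔ κ.part 0 = 0 :=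
  ⟨fun h => h ▸ rfl, fun h => IntPartition.ext <| funext fun i => part_eq_zero_of_le h i.zero_le⟩

/-- The number `|κ|` partitioned by `κ`. -/
noncomputable def size (κ : IntPartition) : ℕ := ∑' i, κ.part i

lemma size_eq_sum_range {n : ℕ} (h : κ.part n = 0) : κ.size = ∑ i ∈ Finset.range n, κ.part i :=
  tsum_eq_sum fun _ hi => part_eq_zero_of_le h (not_lt.mp (mt Finset.mem_range.mpr hi))

@[simp]
lemma size_zero : (0 : IntPartition).size = 0 := size_eq_sum_range (n := 0) rfl

/-- The interlacing relation `κ₀ ≥ μ₀ ≥ κ₁ ≥ μ₁ ≥ ⋯`; equivalently, the skew shape `κ / μ` is a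
horizontal strip. -/
def Interlaces (μ κ : IntPartition) : Prop :=
  ∀ i, μ.part i ≤ κ.part i ∧ κ.part (i + 1) ≤ μ.part i

local infix:50 " ≼ " => Interlaces

lemma zero_interlaces_zero : (0 : IntPartition) ≼ 0 := fun _ => ⟨le_rfl, le_rfl⟩

lemma Interlaces.eq_zero (h : μ ≼ 0) : μ = 0 :=
  eq_zero_iff.mpr (Nat.eq_zero_of_le_zero (h 0).1)

lemma Interlaces.size_le (h : μ ≼ κ) : μ.size ≤ κ.size := by
  obtain ⟨n, hn⟩ := κ.exists_part_eq_zero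
  have hμ : μ.part n = 0 := Nat.eq_zero_of_le_zero (hn ▸ (h n).1)
  rw [size_eq_sum_range hn, size_eq_sum_range hμ]
  exact Finset.sum_le_sum fun i _ => (h i).1

/-- The partition `ρ` with `ρᵢ = min(μᵢ, νᵢ) + max(μᵢ₊₁, νᵢ₊₁) - κᵢ₊₁`. Both `κᵢ₊₁` and `ρᵢ` range
over the interval `[max(μᵢ₊₁, νᵢ₊₁), min(μᵢ, νᵢ)]`, and they are exchanged by its reflection. -/
def reflectDown (hμ : μ ≼ κ) (hν : ν ≼ κ) : IntPartition where
  part i := min (μ.part i) (ν.part i) + max (μ.part (i + 1)) (ν.part (i + 1)) - κ.part (i + 1)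
  antitone := antitone_nat_of_succ_le fun i => by
    have := hμ i; have := hν i; have := hμ (i + 1); have := hν (i + 1); have := hμ (i + 1 + 1)
    have := hν (i + 1 + 1)
    omega
  exists_part_eq_zero := by
    obtain ⟨n, hn⟩ := κ.exists_part_eq_zero
    have := hμ n; have := hν n; have := hμ (n + 1); have := hν (n + 1)
    exact ⟨n, by omega⟩

/-- The partition `κ` with `κ₀ = k + max(μ₀, ν₀)` and
`κᵢ₊₁ = min(μᵢ, νᵢ) + max(μᵢ₊₁, νᵢ₊₁) - ρᵢ`, inverting `reflectDown`. -/
def reflectUp (k : ℕ) (hμ : ρ ≼ μ) (hν : ρ ≼ ν) : IntPartition where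
  part
    | 0 => k + max (μ.part 0) (ν.part 0)
    | i + 1 => min (μ.part i) (ν.part i) + max (μ.part (i + 1)) (ν.part (i + 1)) - ρ.part i
  antitone := antitone_nat_of_succ_le fun
    | 0 => by have := hμ 0; have := hν 0; dsimp only; omega
    | i + 1 => by
      have := hμ i; have := hν i; have := hμ (i + 1); have := hν (i + 1)
      dsimp only; omega
  exists_part_eq_zero := by
    obtain ⟨m, hm⟩ := μ.exists_part_eq_zero
    obtain ⟨n, hn⟩ := ν.exists_part_eq_zero
    have hm' : μ.part (m + n) = 0 := part_eq_zero_of_le hm (m.le_add_right n)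
    have hn' : ν.part (m + n) = 0 := part_eq_zero_of_le hn (n.le_add_left m)
    have hm'' := μ.antitone (Nat.le_add_right (m + n) 1)
    have hn'' := ν.antitone (Nat.le_add_right (m + n) 1)
    exact ⟨m + n + 1, by dsimp only; omega⟩

lemma reflectDown_interlaces (hμ : μ ≼ κ) (hν : ν ≼ κ) :
    reflectDown hμ hν ≼ μ ∧ reflectDown hμ hν ≼ ν := by
  refine ⟨fun i => ?_, fun i => ?_⟩ <;>
  · have := hμ i; have := hν i; have := hμ (i + 1); have := hν (i + 1)
    dsimp only [reflectDown]; omega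

lemma interlaces_reflectUp (k : ℕ) (hμ : ρ ≼ μ) (hν : ρ ≼ ν) :
    μ ≼ reflectUp k hμ hν ∧ ν ≼ reflectUp k hμ hν := by
  refine ⟨fun i => ?_, fun i => ?_⟩ <;> cases i with
  | zero => have := hμ 0; have := hν 0; dsimp only [reflectUp]; omega
  | succ i =>
    have := hμ i; have := hν i; have := hμ (i + 1); have := hν (i + 1)
    dsimp only [reflectUp]; omega

lemma reflectUp_reflectDown (hμ : μ ≼ κ) (hν : ν ≼ κ) :
    reflectUp (κ.part 0 - max (μ.part 0) (ν.part 0)) (reflectDown_interlaces hμ hν).1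
      (reflectDown_interlaces hμ hν).2 = κ := by
  ext i
  cases i with
  | zero => have := hμ 0; have := hν 0; dsimp only [reflectUp]; omega
  | succ i =>
    have := hμ i; have := hν i; have := hμ (i + 1); have := hν (i + 1)
    dsimp only [reflectUp, reflectDown]; omega

lemma reflectDown_reflectUp (k : ℕ) (hμ : ρ ≼ μ) (hν : ρ ≼ ν) :
    reflectDown (interlaces_reflectUp k hμ hν).1 (interlaces_reflectUp k hμ hν).2 = ρ := by
  ext i
  have := hμ i; have := hν i
  dsimp only [reflectUp, reflectDown]; omega

/-- Fomin's local rule for the Robinson–Schensted–Knuth correspondence. -/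
def localRule (μ ν : IntPartition) :
    {κ // μ ≼ κ ∧ ν ≼ κ} ≃ ℕ × {ρ // ρ ≼ μ ∧ ρ ≼ ν} where
  toFun κ := (κ.1.part 0 - max (μ.part 0) (ν.part 0),
    ⟨reflectDown κ.2.1 κ.2.2, reflectDown_interlaces κ.2.1 κ.2.2⟩)
  invFun p := ⟨reflectUp p.1 p.2.2.1 p.2.2.2, interlaces_reflectUp p.1 p.2.2.1 p.2.2.2⟩
  left_inv κ := Subtype.ext (reflectUp_reflectDown κ.2.1 κ.2.2)
  right_inv p := Prod.ext (Nat.add_sub_cancel _ _)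
    (Subtype.ext (reflectDown_reflectUp p.1 p.2.2.1 p.2.2.2))

lemma size_reflectUp_add_size (k : ℕ) (hμ : ρ ≼ μ) (hν : ρ ≼ ν) :
    (reflectUp k hμ hν).size + ρ.size = k + μ.size + ν.size := by
  set κ := reflectUp k hμ hν
  obtain ⟨hμκ, hνκ⟩ : μ ≼ κ ∧ ν ≼ κ := interlaces_reflectUp k hμ hν
  obtain ⟨n, hn⟩ := κ.exists_part_eq_zero
  have hμn : μ.part n = 0 := Nat.eq_zero_of_le_zero (hn ▸ (hμκ n).1)
  have hνn : ν.part n = 0 := Nat.eq_zero_of_le_zero (hn ▸ (hνκ n).1)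
  have hρn : ρ.part n = 0 := Nat.eq_zero_of_le_zero (hμn ▸ (hμ n).1)
  have hreflect (i : ℕ) : κ.part (i + 1) + ρ.part i
      = min (μ.part i) (ν.part i) + max (μ.part (i + 1)) (ν.part (i + 1)) := by
    have := hμ i; have := hν i
    exact Nat.sub_add_cancel (by omega)
  calc κ.size + ρ.size
      = ∑ i ∈ Finset.range n, (κ.part (i + 1) + ρ.part i) + κ.part 0 := by
        rw [size_eq_sum_range (part_eq_zero_of_le hn n.le_succ), size_eq_sum_range hρn,
          Finset.sum_range_succ', Finset.sum_add_distrib]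
        ring
    _ = k + ∑ i ∈ Finset.range n, min (μ.part i) (ν.part i)
          + ∑ i ∈ Finset.range (n + 1), max (μ.part i) (ν.part i) := by
        rw [Finset.sum_congr rfl fun i _ => hreflect i, Finset.sum_add_distrib,
          Finset.sum_range_succ', show κ.part 0 = k + max (μ.part 0) (ν.part 0) from rfl]
        ring
    _ = k + ∑ i ∈ Finset.range n, (min (μ.part i) (ν.part i) + max (μ.part i) (ν.part i)) := by
        rw [Finset.sum_range_succ, hμn, hνn, Finset.sum_add_distrib, max_self, add_zero, add_assoc]
    _ = k + μ.size + ν.size := by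
        simp only [min_add_max, Finset.sum_add_distrib, size_eq_sum_range hμn,
          size_eq_sum_range hνn, add_assoc]

/-! ### Cauchy's identity -/

/-- The branching coefficient `s_{κ/μ}(x)` of Schur functions in one variable: `x ^ (|κ| - |μ|)` if
`μ` interlaces `κ`, and `0` otherwise. -/
noncomputable def stripWeight (x : ℝ≥0∞) (μ κ : IntPartition) : ℝ≥0∞ :=
  if μ ≼ κ then x ^ (κ.size - μ.size) else 0

lemma stripWeight_of_interlaces (x : ℝ≥0∞) (h : μ ≼ κ) :
    stripWeight x μ κ = x ^ (κ.size - μ.size) := if_pos h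

lemma interlaces_of_stripWeight_ne_zero {x : ℝ≥0∞} (h : stripWeight x μ κ ≠ 0) : μ ≼ κ :=
  of_not_not fun hμκ => h (if_neg hμκ)

lemma stripWeight_zero_right (x : ℝ≥0∞) (μ : IntPartition) :
    stripWeight x μ 0 = if μ = 0 then 1 else 0 := by
  by_cases h : μ = 0
  · rw [h, stripWeight_of_interlaces x zero_interlaces_zero, Nat.sub_self, pow_zero, if_pos rfl]
  · rw [stripWeight, if_neg (mt Interlaces.eq_zero h), if_neg h]

lemma stripWeight_mul_stripWeight_localRule_symm (x y : ℝ≥0∞) (μ ν : IntPartition)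
    (p : ℕ × {ρ // ρ ≼ μ ∧ ρ ≼ ν}) :
    stripWeight x μ ((localRule μ ν).symm p) * stripWeight y ν ((localRule μ ν).symm p)
      = (x * y) ^ p.1 * (stripWeight y p.2 μ * stripWeight x p.2 ν) := by
  obtain ⟨k, ρ, hμ, hν⟩ := p
  obtain ⟨hμκ, hνκ⟩ := interlaces_reflectUp k hμ hν
  have hsize := size_reflectUp_add_size k hμ hν
  have := hμ.size_le
  have := hν.size_le
  change stripWeight x μ (reflectUp k hμ hν) * stripWeight y ν (reflectUp k hμ hν) = _
  rw [stripWeight_of_interlaces x hμκ, stripWeight_of_interlaces y hνκ,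
    stripWeight_of_interlaces y hμ, stripWeight_of_interlaces x hν,
    show (reflectUp k hμ hν).size - μ.size = k + (ν.size - ρ.size) by omega,
    show (reflectUp k hμ hν).size - ν.size = k + (μ.size - ρ.size) by omega]
  ring

/-- The commutation relation of the vertex operators `Γ₊(x)` and `Γ₋(y)`, in matrix entries. -/
theorem tsum_stripWeight_mul_stripWeight (x y : ℝ≥0∞) (μ ν : IntPartition) :
    ∑' κ, stripWeight x μ κ * stripWeight y ν κ
      = (1 - x * y)⁻¹ * ∑' ρ, stripWeight y ρ μ * stripWeight x ρ ν := by
  have hκ : Function.support (fun κ => stripWeight x μ κ * stripWeight y ν κ)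
      ⊆ {κ | μ ≼ κ ∧ ν ≼ κ} := fun _ h =>
    ⟨interlaces_of_stripWeight_ne_zero (left_ne_zero_of_mul h),
      interlaces_of_stripWeight_ne_zero (right_ne_zero_of_mul h)⟩
  have hρ : Function.support (fun ρ => stripWeight y ρ μ * stripWeight x ρ ν)
      ⊆ {ρ | ρ ≼ μ ∧ ρ ≼ ν} := fun _ h =>
    ⟨interlaces_of_stripWeight_ne_zero (left_ne_zero_of_mul h),
      interlaces_of_stripWeight_ne_zero (right_ne_zero_of_mul h)⟩
  rw [← tsum_subtype_eq_of_support_subset hκ, ← tsum_subtype_eq_of_support_subset hρ,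
    ← ENNReal.tsum_geometric, ← ENNReal.tsum_mul_right]
  simp only [← ENNReal.tsum_mul_left]
  rw [← ENNReal.tsum_prod]
  exact ((localRule μ ν).symm.tsum_eq _).symm.trans
    (tsum_congr (stripWeight_mul_stripWeight_localRule_symm x y μ ν))

/-- The Schur polynomial `s_κ(x₀, …, xₙ₋₁)`, defined through its branching rule. -/
noncomputable def schur : (n : ℕ) → (x : ℕ → ℝ≥0∞) → IntPartition → ℝ≥0∞
  | 0, _, κ => if κ = 0 then 1 else 0
  | n + 1, x, κ => ∑' μ, stripWeight (x 0) μ κ * schur n (fun i => x (i + 1)) μ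

lemma schur_zero_right (n : ℕ) (x : ℕ → ℝ≥0∞) : schur n x 0 = 1 := by
  induction n generalizing x with
  | zero => exact if_pos rfl
  | succ n ih => simp [schur, stripWeight_zero_right, ih]

lemma tsum_stripWeight_mul_schur (n : ℕ) (x : ℝ≥0∞) (y : ℕ → ℝ≥0∞) (μ : IntPartition) :
    ∑' κ, stripWeight x μ κ * schur n y κ
      = (∏ j ∈ Finset.range n, (1 - x * y j)⁻¹) * schur n y μ := by
  induction n generalizing y μ with
  | zero => simp [schur, stripWeight_zero_right]
  | succ n ih =>
    let y' : ℕ → ℝ≥0∞ := fun j => y (j + 1)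
    calc ∑' κ, stripWeight x μ κ * schur (n + 1) y κ
        = ∑' ν, (∑' κ, stripWeight x μ κ * stripWeight (y 0) ν κ) * schur n y' ν := by
          simp only [schur, ← ENNReal.tsum_mul_left, ← ENNReal.tsum_mul_right, mul_assoc]
          exact ENNReal.tsum_comm
      _ = (1 - x * y 0)⁻¹
            * ∑' ρ, stripWeight (y 0) ρ μ * ∑' ν, stripWeight x ρ ν * schur n y' ν := by
          simp only [tsum_stripWeight_mul_stripWeight, mul_assoc, ENNReal.tsum_mul_left,
            ← ENNReal.tsum_mul_right]
          rw [ENNReal.tsum_comm]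
          simp only [ENNReal.tsum_mul_left]
      _ = (∏ j ∈ Finset.range (n + 1), (1 - x * y j)⁻¹) * schur (n + 1) y μ := by
          simp only [ih, schur, Finset.prod_range_succ', y', mul_left_comm (stripWeight _ _ _),
            ENNReal.tsum_mul_left]
          ring

/-- **Cauchy's identity** for Schur polynomials. -/
theorem tsum_schur_mul_schur (m n : ℕ) (x y : ℕ → ℝ≥0∞) :
    ∑' κ, schur m x κ * schur n y κ
      = ∏ i ∈ Finset.range m, ∏ j ∈ Finset.range n, (1 - x i * y j)⁻¹ := by
  induction m generalizing x with
  | zero => simp [schur, schur_zero_right]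
  | succ m ih =>
    let x' : ℕ → ℝ≥0∞ := fun i => x (i + 1)
    calc ∑' κ, schur (m + 1) x κ * schur n y κ
        = ∑' μ, schur m x' μ * ∑' κ, stripWeight (x 0) μ κ * schur n y κ := by
          simp only [schur, ← ENNReal.tsum_mul_left, ← ENNReal.tsum_mul_right]
          rw [ENNReal.tsum_comm]
          exact tsum_congr fun _ => tsum_congr fun _ => by ring
      _ = (∏ j ∈ Finset.range n, (1 - x 0 * y j)⁻¹) * ∑' μ, schur m x' μ * schur n y μ := by
          simp only [tsum_stripWeight_mul_schur, mul_left_comm (schur m x' _),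
            ENNReal.tsum_mul_left]
      _ = ∏ i ∈ Finset.range (m + 1), ∏ j ∈ Finset.range n, (1 - x i * y j)⁻¹ := by
          rw [ih, Finset.prod_range_succ', mul_comm]

/-! ### Chains of interlacing partitions -/

/-- Chains `c₀ ≽ c₁ ≽ ⋯ ≽ cₙ = ∅` of interlacing partitions, i.e. Gelfand–Tsetlin patterns with
`n` rows. The sequence is indexed by all of `ℕ`, being constantly empty from `n` on. -/
@[ext]
structure InterlacingChain (n : ℕ) : Type where
  toFun : ℕ → IntPartition
  interlaces : ∀ d, toFun (d + 1) ≼ toFun d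
  eq_zero : toFun n = 0

namespace InterlacingChain

variable {n : ℕ}

instance : CoeFun (InterlacingChain n) fun _ => ℕ → IntPartition := ⟨toFun⟩

lemma eq_zero_of_le (c : InterlacingChain n) {d : ℕ} (h : n ≤ d) : c d = 0 := by
  induction d, h using Nat.le_induction with
  | base => exact c.eq_zero
  | succ d _ ih =>
    have hstep := c.interlaces d
    rw [ih] at hstep
    exact hstep.eq_zero

instance : Unique (InterlacingChain 0) where
  default := ⟨fun _ => 0, fun _ => zero_interlaces_zero, rfl⟩
  uniq c := InterlacingChain.ext <| funext fun d => c.eq_zero_of_le d.zero_le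

/-- A chain of length `n + 1` is its first partition followed by a chain of length `n`. -/
def headTailEquiv (n : ℕ) :
    InterlacingChain (n + 1) ≃ {p : IntPartition × InterlacingChain n // p.2 0 ≼ p.1} where
  toFun c := ⟨(c 0, ⟨fun d => c (d + 1), fun d => c.interlaces (d + 1), c.eq_zero⟩), c.interlaces 0⟩
  invFun p := ⟨fun | 0 => p.1.1 | d + 1 => p.1.2 d,
    fun | 0 => p.2 | d + 1 => p.1.2.interlaces d, p.1.2.eq_zero⟩
  left_inv _ := InterlacingChain.ext <| funext fun | 0 => rfl | _ + 1 => rfl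
  right_inv _ := rfl

/-- The monomial `∏ x_d ^ (|c_d| - |c_{d+1}|)` of a Gelfand–Tsetlin pattern. -/
noncomputable def weight (x : ℕ → ℝ≥0∞) (c : InterlacingChain n) : ℝ≥0∞ :=
  ∏ d ∈ Finset.range n, x d ^ ((c d).size - (c (d + 1)).size)

lemma weight_headTailEquiv_symm (x : ℕ → ℝ≥0∞)
    (p : {p : IntPartition × InterlacingChain n // p.2 0 ≼ p.1}) :
    ((headTailEquiv n).symm p).weight x
      = stripWeight (x 0) (p.1.2 0) p.1.1 * p.1.2.weight fun i => x (i + 1) := by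
  rw [weight, Finset.prod_range_succ', stripWeight_of_interlaces _ p.2, mul_comm]
  rfl

theorem tsum_mul_weight (n : ℕ) (x : ℕ → ℝ≥0∞) (F : IntPartition → ℝ≥0∞) :
    ∑' c : InterlacingChain n, F (c 0) * c.weight x = ∑' κ, F κ * schur n x κ := by
  induction n generalizing x F with
  | zero =>
    have hdefault : (default : InterlacingChain 0) 0 = 0 := rfl
    simp [tsum_fintype, weight, schur, hdefault]
  | succ n ih =>
    let x' : ℕ → ℝ≥0∞ := fun i => x (i + 1)
    let G (p : IntPartition × InterlacingChain n) : ℝ≥0∞ :=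
      F p.1 * (stripWeight (x 0) (p.2 0) p.1 * p.2.weight x')
    have hG : Function.support G ⊆ {p | p.2 0 ≼ p.1} := fun _ h =>
      interlaces_of_stripWeight_ne_zero (left_ne_zero_of_mul (right_ne_zero_of_mul h))
    calc ∑' c : InterlacingChain (n + 1), F (c 0) * c.weight x
        = ∑' p : {p : IntPartition × InterlacingChain n | p.2 0 ≼ p.1}, G p :=
          ((headTailEquiv n).symm.tsum_eq _).symm.trans <| tsum_congr fun p =>
            congrArg (F p.1.1 * ·) (weight_headTailEquiv_symm x p)
      _ = ∑' κ, F κ * ∑' c : InterlacingChain n, stripWeight (x 0) (c 0) κ * c.weight x' := by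
          rw [tsum_subtype_eq_of_support_subset hG, ENNReal.tsum_prod']
          simp only [G, ENNReal.tsum_mul_left]
      _ = ∑' κ, F κ * schur (n + 1) x κ := by
          exact tsum_congr fun κ => congrArg (F κ * ·) (ih x' fun μ => stripWeight (x 0) μ κ)

theorem tsum_weight_mul_weight (m n : ℕ) (x y : ℕ → ℝ≥0∞) :
    ∑' p : {p : InterlacingChain m × InterlacingChain n // p.1 0 = p.2 0},
        p.1.1.weight x * p.1.2.weight y
      = ∏ i ∈ Finset.range m, ∏ j ∈ Finset.range n, (1 - x i * y j)⁻¹ := by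
  let G (p : InterlacingChain m × InterlacingChain n) : ℝ≥0∞ :=
    p.1.weight x * ((if p.1 0 = p.2 0 then 1 else 0) * p.2.weight y)
  have hG : Function.support G ⊆ {p | p.1 0 = p.2 0} := fun p h =>
    of_not_not fun hp => h (by simp [G, show ¬ p.1 0 = p.2 0 from hp])
  calc ∑' p : {p : InterlacingChain m × InterlacingChain n // p.1 0 = p.2 0},
        p.1.1.weight x * p.1.2.weight y
      = ∑' p : {p : InterlacingChain m × InterlacingChain n | p.1 0 = p.2 0}, G p :=
        tsum_congr fun p => by simp [G, show p.1.1 0 = p.1.2 0 from p.2]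
    _ = ∑' c : InterlacingChain m, schur n y (c 0) * c.weight x := by
        rw [tsum_subtype_eq_of_support_subset hG, ENNReal.tsum_prod']
        refine tsum_congr fun c => ?_
        simp only [G, ENNReal.tsum_mul_left]
        rw [tsum_mul_weight n y fun κ => if c 0 = κ then 1 else 0]
        simp [mul_comm]
    _ = ∏ i ∈ Finset.range m, ∏ j ∈ Finset.range n, (1 - x i * y j)⁻¹ := by
        rw [tsum_mul_weight, ← tsum_schur_mul_schur]
        simp only [mul_comm]

lemma weight_pow (q : ℝ≥0∞) (k : ℕ) (c : InterlacingChain n) :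
    c.weight (fun d => q ^ (k + d))
      = q ^ (k * (c 0).size + ∑ d ∈ Finset.range n, (c (d + 1)).size) := by
  have habel (m : ℕ) : ∑ d ∈ Finset.range m, (k + d) * ((c d).size - (c (d + 1)).size)
      + (k + m) * (c m).size = k * (c 0).size + ∑ d ∈ Finset.range m, (c (d + 1)).size := by
    induction m with
    | zero => simp
    | succ m ih =>
      obtain ⟨a, ha⟩ := Nat.exists_eq_add_of_le (c.interlaces m).size_le
      rw [Finset.sum_range_succ, Finset.sum_range_succ, ← add_assoc (k * _), ← ih, ha,
        Nat.add_sub_cancel_left]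
      ring
  have hn := habel n
  rw [c.eq_zero, size_zero, mul_zero, add_zero] at hn
  simp only [weight, ← pow_mul]
  rw [Finset.prod_pow_eq_pow_sum, hn]

end InterlacingChain

end IntPartition

/-! ### Infinite sums and products -/

lemma tendsto_tsum_subtype_of_monotone {α : Type*} {s : ℕ → Set α} (hs : Monotone s)
    (hmem : ∀ a, ∃ n, a ∈ s n) (f : α → ℝ≥0∞) :
    Tendsto (fun n => ∑' a : s n, f a) atTop (𝓝 (∑' a, f a)) := by
  refine tendsto_order.mpr ⟨fun b hb => ?_, fun b hb => Eventually.of_forall fun n =>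
    (ENNReal.tsum_comp_le_tsum_of_injective Subtype.val_injective f).trans_lt hb⟩
  rw [ENNReal.tsum_eq_iSup_sum, lt_iSup_iff] at hb
  obtain ⟨t, ht⟩ := hb
  have hsub : ∀ᶠ n in atTop, (t : Set α) ⊆ s n := by
    refine (Filter.eventually_all_finset t).mpr fun a _ => ?_
    obtain ⟨n, hn⟩ := hmem a
    exact (eventually_ge_atTop n).mono fun k hk => hs hk hn
  filter_upwards [hsub] with n hn
  calc b < ∑ a ∈ t, f a := ht
    _ = ∑' a : (t : Set α), f a := (Finset.tsum_subtype' t f).symm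
    _ ≤ ∑' a : s n, f a := ENNReal.tsum_mono_subtype f hn

lemma hasProd_pow_of_hasProd_add {M : Type*} [CommMonoid M] [TopologicalSpace M] [ContinuousMul M]
    [RegularSpace M] {f : ℕ → M} {B : M} (h : HasProd (fun p : ℕ × ℕ => f (p.1 + p.2)) B) :
    HasProd (fun n => f n ^ (n + 1)) B := by
  rw [← Equiv.hasProd_iff Finset.HasAntidiagonal.sigmaAntidiagonalEquivProd] at h
  convert h.sigma fun n => hasProd_fintype _ with n
  have hconst (p : Finset.HasAntidiagonal.antidiagonal n) : f (p.1.1 + p.1.2) = f n :=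
    congrArg f (Finset.HasAntidiagonal.mem_antidiagonal.mp p.2)
  simp [hconst]

lemma exists_hasProd_one_sub_pow {q : ℝ} (h0 : 0 ≤ q) (h1 : q < 1) :
    ∃ B : ℝ, 0 < B ∧ HasProd (fun p : ℕ × ℕ => 1 - q ^ (p.1 + p.2 + 1)) B := by
  have hgeom : Summable fun n : ℕ => q ^ n := summable_geometric_of_lt_one h0 h1
  have hpow : Summable fun p : ℕ × ℕ => q ^ (p.1 + p.2 + 1) := by
    simp only [pow_succ, pow_add]
    exact (hgeom.mul_of_nonneg hgeom (pow_nonneg h0) (pow_nonneg h0)).mul_right q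
  have hlog : Summable fun p : ℕ × ℕ => Real.log (1 - q ^ (p.1 + p.2 + 1)) := by
    simpa only [sub_eq_add_neg] using Real.summable_log_one_add_of_summable hpow.neg
  exact ⟨_, Real.exp_pos _, Real.hasProd_of_hasSum_log
    (fun p => sub_pos.mpr (pow_lt_one₀ h0 h1 (p.1 + p.2).succ_ne_zero)) hlog.hasSum⟩

lemma tendsto_prod_range_prod_range {M : Type*} [CommMonoid M] [TopologicalSpace M]
    {f : ℕ × ℕ → M} {B : M} (h : HasProd f B) :
    Tendsto (fun N => ∏ i ∈ Finset.range N, ∏ j ∈ Finset.range N, f (i, j)) atTop (𝓝 B) := by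
  simp only [← Finset.prod_product' (f := fun i j => f (i, j))]
  have hbox : Tendsto (fun N => Finset.range N ×ˢ Finset.range N) atTop atTop :=
    tendsto_atTop_finset_of_monotone
      (fun _ _ h => Finset.product_subset_product (Finset.range_mono h) (Finset.range_mono h))
      fun p => ⟨p.1 + p.2 + 1, Finset.mem_product.mpr
        ⟨Finset.mem_range.mpr (by omega), Finset.mem_range.mpr (by omega)⟩⟩
  exact h.comp hbox

lemma ofReal_inv_one_sub_pow {q : ℝ} (h0 : 0 ≤ q) (h1 : q < 1) (n : ℕ) :
    ENNReal.ofReal (1 - q ^ (n + 1))⁻¹ = (1 - ENNReal.ofReal q ^ (n + 1))⁻¹ := by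
  have hpos : 0 < 1 - q ^ (n + 1) := sub_pos.mpr (pow_lt_one₀ h0 h1 n.succ_ne_zero)
  rw [ENNReal.ofReal_inv_of_pos hpos, ENNReal.ofReal_sub _ (pow_nonneg h0 _), ENNReal.ofReal_one,
    ENNReal.ofReal_pow h0]

/-! ### Diagonals of plane partitions -/

attribute [ext] PlanePartition

namespace PlanePartition

open IntPartition

variable {m n : ℕ}

lemma exists_part_eq_zero (π : PlanePartition) {f : ℕ → ℕ × ℕ} (hf : f.Injective) :
    ∃ k, π.part (f k).1 (f k).2 = 0 := by
  obtain ⟨k, hk⟩ := (π.finite_support.preimage hf.injOn).exists_notMem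
  exact ⟨k, Function.notMem_support.mp hk⟩

lemma part_eq_zero_of_le {π : PlanePartition} {i j i' j' : ℕ} (h : π.part i j = 0) (hi : i ≤ i')
    (hj : j ≤ j') : π.part i' j' = 0 :=
  Nat.eq_zero_of_le_zero <| h ▸ (π.antitone_fst j' hi).trans (π.antitone_snd i hj)

/-- The reflection of a plane partition in its main diagonal. -/
def transpose (π : PlanePartition) : PlanePartition where
  part i j := π.part j i
  antitone_fst _ _ j h := π.antitone_snd j h
  antitone_snd i _ _ h := π.antitone_fst i h
  finite_support := π.finite_support.preimage Prod.swap_injective.injOn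

/-- The diagonal slice of a plane partition starting at `(d, 0)`; the slice starting at `(0, d)` is
obtained from the transpose. -/
def diag (π : PlanePartition) (d : ℕ) : IntPartition where
  part k := π.part (k + d) k
  antitone _ _ h := (π.antitone_snd _ h).trans (π.antitone_fst _ (Nat.add_le_add_right h d))
  exists_part_eq_zero := π.exists_part_eq_zero (f := fun k => (k + d, k))
    fun _ _ h => congrArg Prod.snd h

lemma diag_succ_interlaces (π : PlanePartition) (d : ℕ) : (π.diag (d + 1)).Interlaces (π.diag d) :=
  fun k => ⟨π.antitone_fst k (Nat.le_succ (k + d)),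
    (π.antitone_fst _ (show k + (d + 1) ≤ k + 1 + d by omega)).trans
      (π.antitone_snd _ (Nat.le_succ k))⟩

/-- The diagonals on or below the main one, of a plane partition with at most `m` rows. -/
def diagChain (π : PlanePartition) (h : π.part m 0 = 0) : InterlacingChain m where
  toFun := π.diag
  interlaces := π.diag_succ_interlaces
  eq_zero := eq_zero_iff.mpr ((congrArg (π.part · 0) (Nat.zero_add m)).trans h)

/-- The array with diagonals `c` on and below the main diagonal, and `c'` above it. -/
def glueFun (c : InterlacingChain m) (c' : InterlacingChain n) (i j : ℕ) : ℕ :=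
  if j ≤ i then (c (i - j)).part j else (c' (j - i)).part i

section Glue

variable {c : InterlacingChain m} {c' : InterlacingChain n}

lemma glueFun_add_left (d k : ℕ) : glueFun c c' (k + d) k = (c d).part k := by
  simp [glueFun]

lemma glueFun_swap (h : c 0 = c' 0) (i j : ℕ) : glueFun c c' i j = glueFun c' c j i := by
  rcases lt_trichotomy i j with hij | rfl | hij
  · simp [glueFun, hij.le, hij.not_ge]
  · simp [glueFun, h]
  · simp [glueFun, hij.le, hij.not_ge]

lemma glueFun_add_right (h : c 0 = c' 0) (d k : ℕ) : glueFun c c' k (k + d) = (c' d).part k := by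
  rw [glueFun_swap h, glueFun_add_left]

lemma antitone_glueFun_fst (h : c 0 = c' 0) (j : ℕ) : Antitone fun i => glueFun c c' i j := by
  refine antitone_nat_of_succ_le fun i => ?_
  rcases le_or_gt j i with hji | hij
  · obtain ⟨d, rfl⟩ := Nat.exists_eq_add_of_le hji
    rw [add_assoc, glueFun_add_left, glueFun_add_left]
    exact (c.interlaces d j).1
  · obtain ⟨d, rfl⟩ := Nat.exists_eq_add_of_le (Nat.succ_le_of_lt hij)
    rw [glueFun_add_right h, Nat.succ_add_eq_add_succ, glueFun_add_right h]
    exact (c'.interlaces d i).2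

lemma antitone_glueFun_snd (h : c 0 = c' 0) (i : ℕ) : Antitone fun j => glueFun c c' i j := by
  simpa only [glueFun_swap h] using antitone_glueFun_fst h.symm i

lemma glueFun_length_zero (c : InterlacingChain m) (c' : InterlacingChain n) :
    glueFun c c' m 0 = 0 := by
  simp [glueFun, c.eq_zero]

lemma glueFun_zero_length (h : c 0 = c' 0) : glueFun c c' 0 n = 0 :=
  (glueFun_swap h 0 n).trans (glueFun_length_zero c' c)

lemma support_glueFun_subset (h : c 0 = c' 0) :
    (Function.support fun p : ℕ × ℕ => glueFun c c' p.1 p.2) ⊆ Set.Iio m ×ˢ Set.Iio n := by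
  rintro ⟨i, j⟩ hij
  refine ⟨lt_of_not_ge (α := ℕ) fun hi => hij (Nat.eq_zero_of_le_zero ?_),
    lt_of_not_ge (α := ℕ) fun hj => hij (Nat.eq_zero_of_le_zero ?_)⟩
  · calc glueFun c c' i j ≤ glueFun c c' i 0 := antitone_glueFun_snd h i j.zero_le
      _ ≤ glueFun c c' m 0 := antitone_glueFun_fst h 0 hi
      _ = 0 := glueFun_length_zero c c'
  · calc glueFun c c' i j ≤ glueFun c c' 0 j := antitone_glueFun_fst h j i.zero_le
      _ ≤ glueFun c c' 0 n := antitone_glueFun_snd h 0 hj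
      _ = 0 := glueFun_zero_length h

/-- The plane partition with prescribed diagonals. -/
def glue (c : InterlacingChain m) (c' : InterlacingChain n) (h : c 0 = c' 0) : PlanePartition where
  part := glueFun c c'
  antitone_fst _ _ j hij := antitone_glueFun_fst h j hij
  antitone_snd i _ _ hij := antitone_glueFun_snd h i hij
  finite_support :=
    ((Set.finite_Iio m).prod (Set.finite_Iio n)).subset (support_glueFun_subset h)

end Glue

/-- The plane partitions with at most `m` rows and `n` columns. -/
def inBox (m n : ℕ) : Set PlanePartition := {π | π.part m 0 = 0 ∧ π.part 0 n = 0}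

lemma glue_diagChain {π : PlanePartition} (h : π ∈ inBox m n) :
    glue (π.diagChain h.1) (π.transpose.diagChain h.2) rfl = π := by
  ext i j
  change glueFun _ _ i j = _
  rcases le_total j i with hji | hij
  · obtain ⟨d, rfl⟩ := Nat.exists_eq_add_of_le hji
    exact glueFun_add_left d j
  · obtain ⟨d, rfl⟩ := Nat.exists_eq_add_of_le hij
    exact glueFun_add_right (c := π.diagChain h.1) (c' := π.transpose.diagChain h.2) rfl d i

/-- A plane partition in a box is a pair of interlacing chains of diagonals that share the main
diagonal. -/
def inBoxEquiv (m n : ℕ) :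
    inBox m n ≃ {p : InterlacingChain m × InterlacingChain n // p.1 0 = p.2 0} where
  toFun π := ⟨(π.1.diagChain π.2.1, π.1.transpose.diagChain π.2.2), rfl⟩
  invFun p := ⟨glue p.1.1 p.1.2 p.2, glueFun_length_zero p.1.1 p.1.2, glueFun_zero_length p.2⟩
  left_inv π := Subtype.ext (glue_diagChain π.2)
  right_inv p := by
    refine Subtype.ext (Prod.ext ?_ ?_) <;> ext d k
    · exact glueFun_add_left d k
    · exact glueFun_add_right p.2 d k

lemma monotone_inBox : Monotone fun N => inBox N N := fun _ _ h _ hπ =>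
  ⟨part_eq_zero_of_le hπ.1 h le_rfl, part_eq_zero_of_le hπ.2 le_rfl h⟩

lemma exists_mem_inBox (π : PlanePartition) : ∃ N, π ∈ inBox N N := by
  obtain ⟨m, hm⟩ := π.exists_part_eq_zero (f := (·, 0)) fun _ _ h => congrArg Prod.fst h
  obtain ⟨n, hn⟩ := π.exists_part_eq_zero (f := (0, ·)) fun _ _ h => congrArg Prod.snd h
  exact ⟨max m n, part_eq_zero_of_le hm (le_max_left m n) le_rfl,
    part_eq_zero_of_le hn le_rfl (le_max_right m n)⟩

/-- The cells of `ℕ × ℕ`, listed by diagonals: `inl (d, k)` is the `k`-th cell of the `d`-th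
diagonal on or below the main one, and `inr (d, k)` that of the `d`-th diagonal above it. -/
def diagonalEquiv : (ℕ × ℕ) ⊕ (ℕ × ℕ) ≃ ℕ × ℕ where
  toFun := Sum.elim (fun p => (p.2 + p.1, p.2)) (fun p => (p.2, p.2 + (p.1 + 1)))
  invFun p := if p.2 ≤ p.1 then .inl (p.1 - p.2, p.2) else .inr (p.2 - p.1 - 1, p.1)
  left_inv := by rintro (⟨d, k⟩ | ⟨d, k⟩) <;> simp
  right_inv := by
    rintro ⟨i, j⟩
    rcases le_or_gt j i with hji | hij
    · simp [hji]
    · simp only [if_neg hij.not_ge, Sum.elim_inr]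
      exact Prod.ext rfl (show i + (j - i - 1 + 1) = j by omega)

lemma size_eq_tsum_size_diag (π : PlanePartition) :
    π.size = ∑' d, (π.diag d).size + ∑' d, (π.transpose.diag (d + 1)).size := by
  let f (p : ℕ × ℕ) : ℕ := π.part p.1 p.2
  have hf {α : Type} {e : α → ℕ × ℕ} (he : e.Injective) : Summable (f ∘ e) :=
    summable_of_hasFiniteSupport (π.finite_support.preimage he.injOn)
  let below : ℕ × ℕ → ℕ × ℕ := diagonalEquiv ∘ Sum.inl
  let above : ℕ × ℕ → ℕ × ℕ := diagonalEquiv ∘ Sum.inr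
  have hbelow : below.Injective := diagonalEquiv.injective.comp Sum.inl_injective
  have habove : above.Injective := diagonalEquiv.injective.comp Sum.inr_injective
  calc π.size = ∑' s, (f ∘ diagonalEquiv) s := (diagonalEquiv.tsum_eq f).symm
    _ = ∑' p, (f ∘ below) p + ∑' p, (f ∘ above) p := (hf hbelow).tsum_sum (hf habove)
    _ = ∑' d, (π.diag d).size + ∑' d, (π.transpose.diag (d + 1)).size := by
        rw [(hf hbelow).tsum_prod' fun d => hf (hbelow.comp (Prod.mk_right_injective d)),
          (hf habove).tsum_prod' fun d => hf (habove.comp (Prod.mk_right_injective d))]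
        rfl

lemma size_diag_eq_zero {π : PlanePartition} (hm : π.part m 0 = 0) {d : ℕ} (hd : m ≤ d) :
    (π.diag d).size = 0 := by
  rw [show π.diag d = 0 from (π.diagChain hm).eq_zero_of_le hd, size_zero]

lemma size_eq_of_mem_inBox {π : PlanePartition} (h : π ∈ inBox m n) :
    π.size = (π.diag 0).size + ∑ d ∈ Finset.range m, (π.diag (d + 1)).size
      + ∑ d ∈ Finset.range n, (π.transpose.diag (d + 1)).size := by
  have hbelow (d : ℕ) (hd : d ∉ Finset.range (m + 1)) : (π.diag d).size = 0 :=
    size_diag_eq_zero h.1 (by rw [Finset.mem_range] at hd; omega)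
  have habove (d : ℕ) (hd : d ∉ Finset.range n) : (π.transpose.diag (d + 1)).size = 0 :=
    size_diag_eq_zero h.2 (by rw [Finset.mem_range] at hd; omega)
  rw [size_eq_tsum_size_diag, tsum_eq_sum hbelow, tsum_eq_sum habove, Finset.sum_range_succ',
    add_comm (π.diag 0).size]

theorem tsum_inBox_pow_size (q : ℝ≥0∞) (m n : ℕ) :
    ∑' π : inBox m n, q ^ π.1.size
      = ∏ i ∈ Finset.range m, ∏ j ∈ Finset.range n, (1 - q ^ (i + j + 1))⁻¹ := by
  have hweight (π : inBox m n) : q ^ π.1.size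
      = (inBoxEquiv m n π).1.1.weight (fun i => q ^ (1 + i))
        * (inBoxEquiv m n π).1.2.weight (fun j => q ^ (0 + j)) := by
    rw [InterlacingChain.weight_pow, InterlacingChain.weight_pow, ← pow_add, one_mul, zero_mul,
      zero_add, size_eq_of_mem_inBox π.2]
    rfl
  rw [tsum_congr hweight, (inBoxEquiv m n).tsum_eq fun p =>
    p.1.1.weight (fun i => q ^ (1 + i)) * p.1.2.weight (fun j => q ^ (0 + j)),
    InterlacingChain.tsum_weight_mul_weight]
  refine Finset.prod_congr rfl fun i _ => Finset.prod_congr rfl fun j _ => ?_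
  rw [← pow_add, show 1 + i + (0 + j) = i + j + 1 by omega]

theorem hasSum_pow_size {q B : ℝ} (h0 : 0 ≤ q) (h1 : q < 1) (hB : 0 < B)
    (hprod : HasProd (fun p : ℕ × ℕ => 1 - q ^ (p.1 + p.2 + 1)) B) :
    HasSum (fun π : PlanePartition => q ^ π.size) B⁻¹ := by
  have hboxes : Tendsto (fun N => ∑' π : inBox N N, ENNReal.ofReal q ^ π.1.size)
      atTop (𝓝 (ENNReal.ofReal B⁻¹)) := by
    refine (ENNReal.tendsto_ofReal
      (tendsto_prod_range_prod_range (hprod.inv₀ hB.ne'))).congr fun N => ?_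
    have hnonneg (i j : ℕ) : 0 ≤ (1 - q ^ (i + j + 1))⁻¹ :=
      inv_nonneg.mpr (sub_nonneg.mpr (pow_le_one₀ h0 h1.le))
    simp only [tsum_inBox_pow_size, ← ofReal_inv_one_sub_pow h0 h1]
    rw [ENNReal.ofReal_prod_of_nonneg fun i _ => Finset.prod_nonneg fun j _ => hnonneg i j]
    exact Finset.prod_congr rfl fun i _ =>
      ENNReal.ofReal_prod_of_nonneg fun j _ => hnonneg i j
  have htsum : ∑' π : PlanePartition, ENNReal.ofReal q ^ π.size = ENNReal.ofReal B⁻¹ :=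
    tendsto_nhds_unique (tendsto_tsum_subtype_of_monotone monotone_inBox
      exists_mem_inBox _) hboxes
  have hsum := ENNReal.hasSum_toReal (htsum.trans_ne ENNReal.ofReal_ne_top)
  rw [← ENNReal.tsum_toReal_eq fun _ => ENNReal.pow_ne_top ENNReal.ofReal_ne_top, htsum,
    ENNReal.toReal_ofReal (inv_nonneg.mpr hB.le)] at hsum
  simpa only [ENNReal.toReal_pow, ENNReal.toReal_ofReal h0] using hsum

end PlanePartition

/-- **McMahon's identity.** For `0 ≤ q < 1`,
`Σ_π q^{|π|} = ∏_{n ≥ 1} (1 - qⁿ)^{-n}`; in particular, for `0 < q < 1` the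
weights `q^{|π|} ∏_{n ≥ 1} (1 - qⁿ)ⁿ` sum to `1`, i.e. they define a
probability measure on plane partitions. -/
theorem macmahon_identity (q : ℝ) (h0 : 0 ≤ q) (h1 : q < 1) :
    (∑' π : PlanePartition, q ^ π.size)
        = (∏' n : ℕ, ((1 - q ^ (n + 1)) ^ (n + 1))⁻¹) ∧
      (0 < q →
        HasSum
          (fun π : PlanePartition =>
            q ^ π.size * ∏' n : ℕ, (1 - q ^ (n + 1)) ^ (n + 1)) 1) := by
  obtain ⟨B, hB, hprod⟩ := exists_hasProd_one_sub_pow h0 h1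
  have hsum := PlanePartition.hasSum_pow_size h0 h1 hB hprod
  have hdiag := hasProd_pow_of_hasProd_add (f := fun n => 1 - q ^ (n + 1)) hprod
  refine ⟨?_, fun _ => ?_⟩
  · rw [hsum.tsum_eq, (hdiag.inv₀ hB.ne').tprod_eq]
  · rw [hdiag.tprod_eq, ← inv_mul_cancel₀ hB.ne']
    exact hsum.mul_right B
end

section
/- Let u ∈ (−2, 2), d ∈ ℤ, and let ξₙ → ∞ be a sequence of positive reals with points xₙ, yₙ ∈ ℤ + 1/2 such that xₙ − yₙ = d for all n and xₙ/√ξₙ → u. Then K_Bessel(xₙ, yₙ; ξₙ) → K_sin(d; arccos(u/2)) as n → ∞. -/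
open Filter Topology

/-- The discrete sine kernel `K_sin(x; φ)`, for `x : ℤ`. -/
noncomputable def Ksin (x : ℤ) (φ : ℝ) : ℝ :=
  if x = 0 then φ / Real.pi else Real.sin (φ * x) / (Real.pi * x)

/-- The discrete Bessel kernel `K_Bessel(x, y; ξ)`, where the half-integers
`x = a + 1/2`, `y = b + 1/2` are encoded by the integers `a`, `b`, so that
`z^{x+1/2} = z^{a+1}` and `w^{-y+1/2} = w^{-b}`. -/
noncomputable def besselKernel (a b : ℤ) (ξ : ℝ) : ℂ :=
  (2 * Real.pi * Complex.I)⁻¹ ^ 2 *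
    ∮ z in C((0 : ℂ), 2), ∮ w in C((0 : ℂ), 1/2),
      Complex.exp ((Real.sqrt ξ : ℂ) * (z - z⁻¹ - w + w⁻¹)) /
        ((z - w) * z ^ (a + 1) * w ^ (-b))

/-!
The kernel is `∑_{k > a} J_k conj (J_{k-d})`, where `J_k` is the `k`-th Fourier coefficient of
`e^{isψ}` with `ψ = 2 sin` and `s = √ξ`: expand `1 / (z - w)` in a geometric series.

For any `C¹` phase `ψ`, the energy of the wave `e^{isψ} h` at the point `x` sits near the
frequency `s ψ'(x)`. Precisely, the measure with mass `|c_k|²` at `(k - a) / s`, where `c_k` are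
the Fourier coefficients of the wave and `a / s → u`, converges weakly to the law of `ψ' - u` under
`|h|² dx`: its characteristic function at `t` is, by Parseval, the correlation of the wave with its
translate by `t / s`, in which the phases `s (ψ(x + t / s) - ψ(x))` tend to `t ψ'(x)`. Hence the
energy in the frequencies `k > a` tends to the energy of `h` in `{ψ' > u}`, and polarization gives
the same for inner products. For the amplitudes `e^{idθ}` and `1` the limit is
`(2π)⁻¹ ∫_{2 cos θ > u} e^{-idθ} dθ`, which is the sine kernel.
-/

open MeasureTheory AddCircle
open scoped ComplexConjugate Real

section WeakConvergence

theorem tendsto_finiteMeasure_apply_of_null_frontier {Ω ι : Type*} [MeasurableSpace Ω]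
    [TopologicalSpace Ω] [OpensMeasurableSpace Ω] [HasOuterApproxClosed Ω] {L : Filter ι}
    {μ : ι → FiniteMeasure Ω} {ν : FiniteMeasure Ω} (hμ : Tendsto μ L (𝓝 ν)) {s : Set Ω}
    (hs : ν (frontier s) = 0) : Tendsto (fun i => μ i s) L (𝓝 (ν s)) := by
  rcases eq_or_ne ν 0 with rfl | hν
  · have hmass : Tendsto (fun i => (μ i).mass) L (𝓝 0) := by simpa using hμ.mass
    exact tendsto_of_tendsto_of_tendsto_of_le_of_le tendsto_const_nhds hmass
      (fun _ => zero_le) fun i => (μ i).apply_le_mass s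
  · have : Nonempty Ω := by
      by_contra hΩ
      rw [not_nonempty_iff] at hΩ
      exact hν (FiniteMeasure.eq_of_forall_apply_eq _ _ fun s _ => by simp [s.eq_empty_of_isEmpty])
    have hnull : ν.normalize (frontier s) = 0 := by
      rw [FiniteMeasure.normalize_eq_of_nonzero ν hν, hs, mul_zero]
    have hnorm := ProbabilityMeasure.tendsto_measure_of_null_frontier_of_tendsto
      (FiniteMeasure.tendsto_normalize_of_tendsto hμ hν) hnull
    simp_rw [FiniteMeasure.self_eq_mass_mul_normalize]
    exact hμ.mass.mul hnorm

variable {E : Type*} [NormedAddCommGroup E] [InnerProductSpace ℝ E] [MeasurableSpace E]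

theorem charFun_normalize {μ : FiniteMeasure E} (hμ : μ ≠ 0) (t : E) :
    charFun (μ.normalize : Measure E) t = (μ.mass : ℂ)⁻¹ * charFun (μ : Measure E) t := by
  rw [FiniteMeasure.toMeasure_normalize_eq_of_nonzero μ hμ, charFun_apply, charFun_apply,
    integral_smul_nnreal_measure, NNReal.smul_def, Complex.real_smul]
  push_cast
  rfl

theorem tendsto_finiteMeasure_of_tendsto_charFun [FiniteDimensional ℝ E] [BorelSpace E]
    {μ : ℕ → FiniteMeasure E} {ν : FiniteMeasure E}
    (h : ∀ t, Tendsto (fun n => charFun (μ n : Measure E) t) atTop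
      (𝓝 (charFun (ν : Measure E) t))) :
    Tendsto μ atTop (𝓝 ν) := by
  have hmassC : Tendsto (fun n => (((μ n).mass : ℝ) : ℂ)) atTop (𝓝 ((ν.mass : ℝ) : ℂ)) := by
    have h_zero := h 0
    simp only [charFun_zero] at h_zero
    exact h_zero
  have hmass : Tendsto (fun n => (μ n).mass) atTop (𝓝 ν.mass) :=
    NNReal.tendsto_coe.1 (tendsto_ofReal_iff.1 hmassC)
  rcases eq_or_ne ν 0 with rfl | hν
  · exact FiniteMeasure.tendsto_zero_of_tendsto_zero_mass hmass
  · refine FiniteMeasure.tendsto_of_tendsto_normalize_testAgainstNN_of_tendsto_mass ?_ hmass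
    refine ProbabilityMeasure.tendsto_of_tendsto_charFun fun t => ?_
    have hmass_ne : ν.mass ≠ 0 := ν.mass_nonzero_iff.2 hν
    rw [charFun_normalize hν]
    refine ((hmassC.inv₀ (by exact_mod_cast hmass_ne)).mul (h t)).congr' ?_
    filter_upwards [hmass.eventually_ne hmass_ne] with n hn
    rw [charFun_normalize ((μ n).mass_nonzero_iff.1 hn)]

theorem tendsto_real_Ioi_of_tendsto_charFun {μ : ℕ → Measure ℝ} {ν : Measure ℝ}
    [∀ n, IsFiniteMeasure (μ n)] [IsFiniteMeasure ν]
    (h : ∀ t, Tendsto (fun n => charFun (μ n) t) atTop (𝓝 (charFun ν t))) {r : ℝ}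
    (hr : ν {r} = 0) :
    Tendsto (fun n => (μ n).real (Set.Ioi r)) atTop (𝓝 (ν.real (Set.Ioi r))) := by
  have hweak := tendsto_finiteMeasure_of_tendsto_charFun (μ := fun n => ⟨μ n, inferInstance⟩)
    (ν := ⟨ν, inferInstance⟩) h
  have hnull : ν (frontier (Set.Ioi r)) = 0 := by rwa [frontier_Ioi]
  exact NNReal.tendsto_coe.2 (tendsto_finiteMeasure_apply_of_null_frontier hweak
    ((FiniteMeasure.null_iff_toMeasure_null _ _).2 hnull))

end WeakConvergence

section Energy

variable {α : Type*} [MeasurableSpace α] {μ : Measure α} {f g : α → ℂ}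

/-- The measure `|f|² μ`: the distribution of the energy of a square-integrable `f`. For the
Fourier coefficients of a function and the counting measure on `ℤ`, it is its power spectrum. -/
noncomputable def energyMeasure (μ : Measure α) (f : α → ℂ) : Measure α :=
  μ.withDensity fun x => ‖f x‖ₑ ^ 2

theorem isFiniteMeasure_energyMeasure (hf : MemLp f 2 μ) : IsFiniteMeasure (energyMeasure μ f) := by
  refine isFiniteMeasure_withDensity (ne_of_lt ?_)
  simpa using lintegral_rpow_enorm_lt_top_of_eLpNorm_lt_top two_ne_zero ENNReal.ofNat_ne_top hf.2

theorem energyMeasure_real_apply (hf : Measurable f) {s : Set α} (hs : MeasurableSet s) :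
    (energyMeasure μ f).real s = ∫ x in s, ‖f x‖ ^ 2 ∂μ := by
  rw [measureReal_def, energyMeasure, withDensity_apply _ hs,
    integral_eq_lintegral_of_nonneg_ae (by filter_upwards with x; positivity) (by fun_prop)]
  simp_rw [← ofReal_norm, ENNReal.ofReal_pow (norm_nonneg _)]

theorem integral_energyMeasure (hf : Measurable f) (φ : α → ℂ) :
    ∫ x, φ x ∂energyMeasure μ f = ∫ x, ‖f x‖ ^ 2 * φ x ∂μ := by
  rw [energyMeasure, integral_withDensity_eq_integral_toReal_smul (by fun_prop) (by simp)]
  simp [Complex.real_smul]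

theorem conj_mul_eq_sum_norm_sq (z w : ℂ) :
    conj z * w = (∑ j ∈ Finset.range 4, (-Complex.I) ^ j * ‖z + Complex.I ^ j * w‖ ^ 2) / 4 := by
  simp only [← Complex.conj_mul', Finset.sum_range_succ, Finset.sum_range_zero, map_add, map_mul,
    map_pow, Complex.conj_I]
  grind [Complex.I_sq]

theorem integral_conj_mul_eq_sum_integral_norm_sq (hf : MemLp f 2 μ) (hg : MemLp g 2 μ) :
    ∫ x, conj (f x) * g x ∂μ =
      (∑ j ∈ Finset.range 4,
        (-Complex.I) ^ j * ((∫ x, ‖f x + Complex.I ^ j * g x‖ ^ 2 ∂μ : ℝ) : ℂ)) / 4 := by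
  have hint (j : ℕ) : Integrable (fun x => ‖f x + Complex.I ^ j * g x‖ ^ 2) μ :=
    (hf.add (hg.const_mul _)).integrable_norm_pow (by simp)
  simp_rw [conj_mul_eq_sum_norm_sq]
  rw [integral_div, integral_finsetSum]
  · simp_rw [integral_const_mul, ← integral_complex_ofReal, Complex.ofReal_pow]
  · intro j _
    exact_mod_cast (hint j).ofReal.const_mul _

end Energy

section FourierCoefficients

theorem integral_Ioi_count {E : Type*} [NormedAddCommGroup E] [NormedSpace ℝ E] [CompleteSpace E]
    {F : ℤ → E} {a : ℤ} (hF : IntegrableOn F (Set.Ioi a) Measure.count) :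
    ∫ k in Set.Ioi a, F k ∂Measure.count = ∑' k : ℕ, F (a + (k + 1)) := by
  rw [← integral_indicator .of_discrete,
    integral_countable ((integrable_indicator_iff .of_discrete).2 hF)]
  have hinj : Function.Injective fun k : ℕ => a + ((k : ℤ) + 1) := fun k l hkl => by
    simpa using hkl
  rw [← hinj.tsum_eq]
  · refine tsum_congr fun k => ?_
    rw [Set.indicator_of_mem (by simp)]
    simp
  · intro k hk
    have hak : a < k := by
      by_contra hak
      simp [hak] at hk
    exact ⟨(k - a - 1).toNat, by lia⟩

variable {T : ℝ}

theorem fourier_add_apply (k : ℤ) (x y : AddCircle T) :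
    fourier k (x + y) = fourier k x * fourier k y := by
  simp only [fourier_apply, smul_add, toCircle_add, Circle.coe_mul]

variable [hT : Fact (0 < T)]

theorem nullSingletonClass_haarAddCircle :
    NullSingletonClass (haarAddCircle (T := T)) := by
  have : Infinite (Set.Ioc 0 (0 + T)) := (Set.Ioc_infinite (by simpa using hT.out)).to_subtype
  have : Nontrivial (AddCircle T) := (AddCircle.equivIoc T 0).nontrivial
  infer_instance

theorem fourierCoeff_comp_add_right (f : AddCircle T → ℂ) (y : AddCircle T) (k : ℤ) :
    fourierCoeff (fun x => f (x + y)) k = fourier k y * fourierCoeff f k := by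
  simp_rw [fourierCoeff, smul_eq_mul]
  rw [← integral_add_right_eq_self (μ := haarAddCircle) (fun x => fourier (-k) x * f x) y,
    ← integral_const_mul]
  congr 1 with x
  have h : fourier k y * fourier (-k) y = 1 := by rw [← fourier_add, add_neg_cancel, fourier_zero]
  rw [fourier_add_apply]
  linear_combination (-(fourier (-k) x * f (x + y))) * h

theorem fourierCoeff_fourier_mul (f : AddCircle T → ℂ) (d k : ℤ) :
    fourierCoeff (fun x => fourier d x * f x) k = fourierCoeff f (k - d) := by
  simp_rw [fourierCoeff, smul_eq_mul, ← mul_assoc, ← fourier_add, neg_sub, neg_add_eq_sub]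

theorem fourierCoeff_conj (f : AddCircle T → ℂ) (k : ℤ) :
    fourierCoeff (fun x => conj (f x)) k = conj (fourierCoeff f (-k)) := by
  simp_rw [fourierCoeff, ← integral_conj, smul_eq_mul, map_mul, ← fourier_neg, neg_neg]

theorem memLp_fourierCoeff (f : C(AddCircle T, ℂ)) : MemLp (fourierCoeff f) 2 Measure.count := by
  rw [memLp_two_iff_integrable_sq_norm (measurable_of_countable _).aestronglyMeasurable,
    integrable_count_iff]
  have h := (hasSum_sq_fourierCoeff (ContinuousMap.toLp (E := ℂ) 2 haarAddCircle ℂ f)).summable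
  simpa only [fourierCoeff_toLp, Real.norm_eq_abs, abs_norm, norm_pow, norm_norm] using h

theorem integrable_conj_fourierCoeff_mul_fourierCoeff (f g : C(AddCircle T, ℂ)) :
    Integrable (fun k => conj (fourierCoeff f k) * fourierCoeff g k) Measure.count :=
  (memLp_fourierCoeff f).star.integrable_mul (memLp_fourierCoeff g)

theorem integral_conj_fourierCoeff_mul_fourierCoeff (f g : C(AddCircle T, ℂ)) :
    ∫ k, conj (fourierCoeff f k) * fourierCoeff g k ∂Measure.count =
      ∫ x, conj (f x) * g x ∂haarAddCircle := by
  have h := (fourierBasis (T := T)).tsum_inner_mul_inner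
    (ContinuousMap.toLp (E := ℂ) 2 haarAddCircle ℂ f)
    (ContinuousMap.toLp (E := ℂ) 2 haarAddCircle ℂ g)
  rw [ContinuousMap.inner_toLp] at h
  simp_rw [mul_comm (g _), ← inner_conj_symm (ContinuousMap.toLp _ _ _ f),
    ← HilbertBasis.repr_apply_apply, fourierBasis_repr, fourierCoeff_toLp] at h
  simpa [integral_countable (integrable_conj_fourierCoeff_mul_fourierCoeff f g)] using h

theorem integral_fourier_energyMeasure_fourierCoeff (f : C(AddCircle T, ℂ)) (y : AddCircle T) :
    ∫ k, fourier k y ∂energyMeasure Measure.count (fourierCoeff f) =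
      ∫ x, conj (f x) * f (x + y) ∂haarAddCircle := by
  rw [integral_energyMeasure (measurable_of_countable _)]
  have hparseval := integral_conj_fourierCoeff_mul_fourierCoeff f (f.comp ⟨(· + y), by fun_prop⟩)
  simp only [ContinuousMap.comp_apply, ContinuousMap.coe_mk] at hparseval
  rw [← hparseval]
  congr 1 with k
  rw [show ⇑(f.comp ⟨(· + y), by fun_prop⟩) = fun x => f (x + y) from rfl,
    fourierCoeff_comp_add_right, ← Complex.conj_mul']
  ring

end FourierCoefficients

local instance fact_two_pi_pos : Fact (0 < 2 * π) := ⟨Real.two_pi_pos⟩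

section OscillatoryWaves

theorem fourier_two_pi_coe_apply (k : ℤ) (θ : ℝ) :
    fourier k (θ : AddCircle (2 * π)) = Complex.exp (k * θ * Complex.I) := by
  rw [fourier_coe_apply]
  congr 1
  push_cast
  field [Real.pi_ne_zero]

theorem charFun_map_energyMeasure_fourierCoeff (f : C(AddCircle (2 * π), ℂ)) (a s t : ℝ) :
    charFun ((energyMeasure Measure.count (fourierCoeff f)).map fun k : ℤ => ((k : ℝ) - a) / s) t =
      Complex.exp (-(t * (a / s)) * Complex.I) *
        ∫ x, conj (f x) * f (x + (t / s : ℝ)) ∂haarAddCircle := by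
  rw [charFun_apply_real, integral_map (measurable_of_countable _).aemeasurable (by fun_prop),
    ← integral_fourier_energyMeasure_fourierCoeff, ← integral_const_mul]
  congr 1 with k
  rw [fourier_two_pi_coe_apply, ← Complex.exp_add]
  push_cast
  ring_nf

/-- The wave `e^{isψ} h` on the circle of length `2π`, with phase `sψ` and amplitude `h`. -/
noncomputable def oscillatory (s : ℝ) (ψ : C(AddCircle (2 * π), ℝ))
    (h : C(AddCircle (2 * π), ℂ)) : C(AddCircle (2 * π), ℂ) where
  toFun x := Complex.exp ((s * ψ x : ℝ) * Complex.I) * h x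

variable {ψ ψ' : C(AddCircle (2 * π), ℝ)}

theorem conj_oscillatory_mul_oscillatory (s : ℝ) (h : C(AddCircle (2 * π), ℂ))
    (x y : AddCircle (2 * π)) :
    conj (oscillatory s ψ h x) * oscillatory s ψ h y =
      Complex.exp ((s * (ψ y - ψ x) : ℝ) * Complex.I) * (conj (h x) * h y) := by
  have hexp : Complex.exp ((s * (ψ y - ψ x) : ℝ) * Complex.I) =
      Complex.exp (-((s * ψ x : ℝ) * Complex.I)) * Complex.exp ((s * ψ y : ℝ) * Complex.I) := by
    rw [← Complex.exp_add]
    push_cast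
    ring_nf
  rw [hexp]
  simp only [oscillatory, ContinuousMap.coe_mk, map_mul, ← Complex.exp_conj, Complex.conj_ofReal,
    Complex.conj_I, mul_neg]
  ring

theorem tendsto_mul_phase_sub {s : ℕ → ℝ} (hs : Tendsto s atTop atTop)
    (hψ : ∀ θ : ℝ, HasDerivAt (fun η : ℝ => ψ η) (ψ' θ) θ) (t : ℝ) (x : AddCircle (2 * π)) :
    Tendsto (fun n => s n * (ψ (x + (t / s n : ℝ)) - ψ x)) atTop (𝓝 (t * ψ' x)) := by
  obtain ⟨θ, rfl⟩ := QuotientAddGroup.mk_surjective x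
  have hlim := (hψ θ).hasFDerivAt.lim t (tendsto_norm_atTop_atTop.comp hs)
  simpa [div_eq_inv_mul] using hlim

theorem tendsto_integral_conj_oscillatory_mul_translate {s : ℕ → ℝ} (hs : Tendsto s atTop atTop)
    (hψ : ∀ θ : ℝ, HasDerivAt (fun η : ℝ => ψ η) (ψ' θ) θ) (h : C(AddCircle (2 * π), ℂ))
    (t : ℝ) :
    Tendsto
      (fun n => ∫ x, conj (oscillatory (s n) ψ h x) * oscillatory (s n) ψ h (x + (t / s n : ℝ))
        ∂haarAddCircle) atTop
      (𝓝 (∫ x, ‖h x‖ ^ 2 * Complex.exp (t * ψ' x * Complex.I) ∂haarAddCircle)) := by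
  have hshift : Tendsto (fun n => ((t / s n : ℝ) : AddCircle (2 * π))) atTop (𝓝 0) :=
    (AddCircle.continuous_mk' (2 * π)).tendsto' 0 0 (by simp) |>.comp (hs.const_div_atTop t)
  refine tendsto_integral_of_dominated_convergence (fun _ => ‖h‖ * ‖h‖) (fun n => ?_)
    (integrable_const _) (fun n => ?_) ?_
  · exact Continuous.aestronglyMeasurable (by fun_prop)
  · filter_upwards with x
    rw [conj_oscillatory_mul_oscillatory, norm_mul, Complex.norm_exp_ofReal_mul_I, one_mul,
      norm_mul, RCLike.norm_conj]
    gcongr <;> exact h.norm_coe_le_norm _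
  · filter_upwards with x
    simp_rw [conj_oscillatory_mul_oscillatory]
    have hphase : Tendsto
        (fun n => Complex.exp ((s n * (ψ (x + (t / s n : ℝ)) - ψ x) : ℝ) * Complex.I)) atTop
        (𝓝 (Complex.exp ((t * ψ' x : ℝ) * Complex.I))) :=
      (by fun_prop : Continuous fun r : ℝ => Complex.exp (r * Complex.I)).tendsto _ |>.comp
        (tendsto_mul_phase_sub hs hψ t x)
    have hamp : Tendsto (fun n => conj (h x) * h (x + (t / s n : ℝ))) atTop
        (𝓝 (conj (h x) * h x)) :=
      ((h.continuous.tendsto' _ _ (by rw [add_zero])).comp (hshift.const_add x)).const_mul _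
    convert hphase.mul hamp using 2
    rw [← Complex.conj_mul']
    push_cast
    ring

theorem tendsto_charFun_map_energyMeasure_fourierCoeff_oscillatory {s a : ℕ → ℝ} {u : ℝ}
    (hs : Tendsto s atTop atTop) (ha : Tendsto (fun n => a n / s n) atTop (𝓝 u))
    (hψ : ∀ θ : ℝ, HasDerivAt (fun η : ℝ => ψ η) (ψ' θ) θ) (h : C(AddCircle (2 * π), ℂ))
    (t : ℝ) :
    Tendsto
      (fun n => charFun ((energyMeasure Measure.count (fourierCoeff (oscillatory (s n) ψ h))).map
        fun k : ℤ => ((k : ℝ) - a n) / s n) t) atTop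
      (𝓝 (charFun ((energyMeasure haarAddCircle h).map fun x => ψ' x - u) t)) := by
  simp_rw [charFun_map_energyMeasure_fourierCoeff]
  have hcenter : Tendsto (fun n => Complex.exp (-(t * (a n / s n)) * Complex.I)) atTop
      (𝓝 (Complex.exp (-(t * u) * Complex.I))) := by
    have := (by fun_prop : Continuous fun r : ℝ => Complex.exp (-(t * r) * Complex.I)).tendsto u
    simpa [Function.comp_def] using this.comp ha
  convert hcenter.mul (tendsto_integral_conj_oscillatory_mul_translate hs hψ h t) using 2
  rw [charFun_apply_real, integral_map (by fun_prop) (by fun_prop),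
    integral_energyMeasure (by fun_prop), ← integral_const_mul]
  congr 1 with x
  rw [mul_left_comm, ← Complex.exp_add]
  push_cast
  ring_nf

theorem tendsto_integral_Ioi_norm_sq_fourierCoeff_oscillatory {s : ℕ → ℝ} {a : ℕ → ℤ} {u : ℝ}
    (hs : Tendsto s atTop atTop) (ha : Tendsto (fun n => a n / s n) atTop (𝓝 u))
    (hψ : ∀ θ : ℝ, HasDerivAt (fun η : ℝ => ψ η) (ψ' θ) θ)
    (hu : haarAddCircle {x | ψ' x = u} = 0) (h : C(AddCircle (2 * π), ℂ)) :
    Tendsto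
      (fun n => ∫ k in Set.Ioi (a n), ‖fourierCoeff (oscillatory (s n) ψ h) k‖ ^ 2 ∂Measure.count)
      atTop (𝓝 (∫ x in {x | u < ψ' x}, ‖h x‖ ^ 2 ∂haarAddCircle)) := by
  have (n : ℕ) := isFiniteMeasure_energyMeasure (memLp_fourierCoeff (oscillatory (s n) ψ h))
  have := isFiniteMeasure_energyMeasure (h.continuous.memLp_of_hasCompactSupport
    (μ := haarAddCircle) (p := 2) (.of_compactSpace h))
  have hnull : ((energyMeasure haarAddCircle h).map fun x => ψ' x - u) {0} = 0 := by
    rw [Measure.map_apply (by fun_prop) (measurableSet_singleton 0)]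
    refine withDensity_absolutelyContinuous _ _ ?_
    simpa [Set.preimage, sub_eq_zero] using hu
  have hlim := tendsto_real_Ioi_of_tendsto_charFun
    (tendsto_charFun_map_energyMeasure_fourierCoeff_oscillatory hs ha hψ h) hnull
  rw [map_measureReal_apply (by fun_prop) measurableSet_Ioi,
    energyMeasure_real_apply (by fun_prop) (measurableSet_Ioi.preimage (by fun_prop))] at hlim
  simp only [Set.preimage, Set.mem_Ioi, sub_pos] at hlim
  refine hlim.congr' ?_
  filter_upwards [hs.eventually_gt_atTop 0] with n hn
  rw [map_measureReal_apply (measurable_of_countable _) measurableSet_Ioi,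
    energyMeasure_real_apply (measurable_of_countable _) (.of_discrete)]
  congr 2
  ext k
  simp [div_pos_iff_of_pos_right hn]

theorem fourierCoeff_oscillatory_add_smul (s : ℝ) (f g : C(AddCircle (2 * π), ℂ)) (c : ℂ)
    (k : ℤ) :
    fourierCoeff (oscillatory s ψ (f + c • g)) k =
      fourierCoeff (oscillatory s ψ f) k + c * fourierCoeff (oscillatory s ψ g) k := by
  have hlin : ⇑(oscillatory s ψ (f + c • g)) = ⇑(oscillatory s ψ f) + c • ⇑(oscillatory s ψ g) := by
    ext x
    simp only [oscillatory, ContinuousMap.coe_mk, ContinuousMap.add_apply, ContinuousMap.smul_apply,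
      Pi.add_apply, Pi.smul_apply, smul_eq_mul]
    ring
  rw [hlin, fourierCoeff.add, Pi.add_apply, fourierCoeff.const_smul, smul_eq_mul]
  · exact (oscillatory s ψ f).continuous.integrable_of_hasCompactSupport (.of_compactSpace _)
  · exact (continuous_const.smul (oscillatory s ψ g).continuous).integrable_of_hasCompactSupport
      (.of_compactSpace _)

theorem tendsto_integral_Ioi_conj_fourierCoeff_oscillatory_mul {s : ℕ → ℝ} {a : ℕ → ℤ} {u : ℝ}
    (hs : Tendsto s atTop atTop) (ha : Tendsto (fun n => a n / s n) atTop (𝓝 u))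
    (hψ : ∀ θ : ℝ, HasDerivAt (fun η : ℝ => ψ η) (ψ' θ) θ)
    (hu : haarAddCircle {x | ψ' x = u} = 0) (f g : C(AddCircle (2 * π), ℂ)) :
    Tendsto
      (fun n => ∫ k in Set.Ioi (a n), conj (fourierCoeff (oscillatory (s n) ψ f) k) *
        fourierCoeff (oscillatory (s n) ψ g) k ∂Measure.count)
      atTop (𝓝 (∫ x in {x | u < ψ' x}, conj (f x) * g x ∂haarAddCircle)) := by
  have hmemLp (h : C(AddCircle (2 * π), ℂ)) : MemLp h 2 haarAddCircle :=
    h.continuous.memLp_of_hasCompactSupport (.of_compactSpace h)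
  rw [integral_conj_mul_eq_sum_integral_norm_sq ((hmemLp f).restrict _) ((hmemLp g).restrict _)]
  simp_rw [integral_conj_mul_eq_sum_integral_norm_sq ((memLp_fourierCoeff _).restrict _)
    ((memLp_fourierCoeff _).restrict _), ← fourierCoeff_oscillatory_add_smul]
  refine (tendsto_finsetSum _ fun j _ => ?_).div_const 4
  exact ((tendsto_integral_Ioi_norm_sq_fourierCoeff_oscillatory hs ha hψ hu
    (f + Complex.I ^ j • g)).ofReal).const_mul _

end OscillatoryWaves

section ContourIntegrals

theorem hasSum_circleIntegral_of_norm_le {F : ℕ → ℂ → ℂ} {f : ℂ → ℂ} {c : ℂ} {R : ℝ} {B : ℕ → ℝ}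
    (hR : 0 ≤ R) (hF : ∀ k, ContinuousOn (F k) (Metric.sphere c R)) (hB : Summable B)
    (hFB : ∀ k, ∀ z ∈ Metric.sphere c R, ‖F k z‖ ≤ B k)
    (hFf : ∀ z ∈ Metric.sphere c R, HasSum (fun k => F k z) (f z)) :
    HasSum (fun k => ∮ z in C(c, R), F k z) (∮ z in C(c, R), f z) := by
  have hunif : TendstoUniformlyOn (fun (s : Finset ℕ) z => ∑ k ∈ s, F k z) f atTop
      (Metric.sphere c R) :=
    (tendstoUniformlyOn_tsum hB hFB).congr_right fun z hz => (hFf z hz).tsum_eq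
  have hlim := hunif.tendsto_circleIntegral_of_continuousOn hR
    (.of_forall fun s => continuousOn_finsetSum s fun k _ => hF k)
  refine hlim.congr fun s => ?_
  exact circleIntegral.integral_fun_sum fun k _ => (hF k).circleIntegrable hR

variable {f g : ℂ → ℂ} {r R : ℝ}

theorem hasSum_inv_pow_mul_circleIntegral (hr : 0 ≤ r) (hg : ContinuousOn g (Metric.sphere 0 r))
    {z : ℂ} (hz : r < ‖z‖) :
    HasSum (fun k : ℕ => z⁻¹ ^ (k + 1) * ∮ w in C(0, r), g w * w ^ k)
      (∮ w in C(0, r), g w / (z - w)) := by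
  have hz0 : 0 < ‖z‖ := hr.trans_lt hz
  obtain ⟨B, hB⟩ := (isCompact_sphere (0 : ℂ) r).exists_bound_of_continuousOn hg
  simp_rw [← circleIntegral.integral_const_mul]
  refine hasSum_circleIntegral_of_norm_le (B := fun k => ‖z‖⁻¹ * B * (‖z‖⁻¹ * r) ^ k) hr
    (fun k => by fun_prop) ?_ (fun k w hw => ?_) fun w hw => ?_
  · exact (summable_geometric_of_lt_one (by positivity)
      ((inv_mul_lt_one₀ hz0).2 hz)).mul_left _
  · have hw' : ‖w‖ = r := by simpa using hw
    calc ‖z⁻¹ ^ (k + 1) * (g w * w ^ k)‖ = ‖z‖⁻¹ * ‖g w‖ * (‖z‖⁻¹ * r) ^ k := by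
          simp only [norm_mul, norm_pow, norm_inv, hw']
          ring
      _ ≤ ‖z‖⁻¹ * B * (‖z‖⁻¹ * r) ^ k := by
          gcongr
          exact hB w hw
  · have hw' : ‖w‖ = r := by simpa using hw
    have hzw : ‖z⁻¹ * w‖ < 1 := by
      rwa [norm_mul, norm_inv, hw', inv_mul_lt_one₀ hz0]
    have hne : z - w ≠ 0 := sub_ne_zero.2 fun h => hz.ne' (h ▸ hw')
    have hsum : g w / (z - w) = z⁻¹ * g w * (1 - z⁻¹ * w)⁻¹ := by
      rw [show 1 - z⁻¹ * w = z⁻¹ * (z - w) by field [norm_pos_iff.1 hz0]]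
      field [norm_pos_iff.1 hz0]
    rw [hsum]
    refine ((hasSum_geometric_of_norm_lt_one hzw).mul_left (z⁻¹ * g w)).congr_fun fun k => ?_
    ring

theorem hasSum_circleIntegral_mul_circleIntegral (hr : 0 ≤ r) (hrR : r < R)
    (hf : ContinuousOn f (Metric.sphere 0 R)) (hg : ContinuousOn g (Metric.sphere 0 r)) :
    HasSum
      (fun k : ℕ => (∮ z in C(0, R), f z * z⁻¹ ^ (k + 1)) * ∮ w in C(0, r), g w * w ^ k)
      (∮ z in C(0, R), ∮ w in C(0, r), f z * (g w / (z - w))) := by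
  have hR : 0 < R := hr.trans_lt hrR
  obtain ⟨A, hA⟩ := (isCompact_sphere (0 : ℂ) R).exists_bound_of_continuousOn hf
  obtain ⟨B, hB⟩ := (isCompact_sphere (0 : ℂ) r).exists_bound_of_continuousOn hg
  have hmoment (k : ℕ) : ‖∮ w in C(0, r), g w * w ^ k‖ ≤ 2 * π * r * (B * r ^ k) := by
    refine circleIntegral.norm_integral_le_of_norm_le_const hr fun w hw => ?_
    have hw' : ‖w‖ = r := by simpa using hw
    rw [norm_mul, norm_pow, hw']
    gcongr
    exact hB w hw
  simp_rw [mul_comm (circleIntegral _ _ R), ← circleIntegral.integral_const_mul]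
  refine hasSum_circleIntegral_of_norm_le
    (B := fun k => 2 * π * r * B * A * R⁻¹ * (R⁻¹ * r) ^ k) hR.le (fun k => ?_) ?_
    (fun k z hz => ?_) fun z hz => ?_
  · have hinv : ContinuousOn (fun z : ℂ => z⁻¹) (Metric.sphere 0 R) :=
      continuousOn_id.inv₀ fun z hz => ne_zero_of_mem_sphere hR.ne' ⟨z, hz⟩
    fun_prop
  · exact (summable_geometric_of_lt_one (by positivity) ((inv_mul_lt_one₀ hR).2 hrR)).mul_left _
  · have hz' : ‖z‖ = R := by simpa using hz
    calc ‖(∮ w in C(0, r), g w * w ^ k) * (f z * z⁻¹ ^ (k + 1))‖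
        = ‖∮ w in C(0, r), g w * w ^ k‖ * (‖f z‖ * R⁻¹ ^ (k + 1)) := by
          simp only [norm_mul, norm_pow, norm_inv, hz']
      _ ≤ 2 * π * r * (B * r ^ k) * (A * R⁻¹ ^ (k + 1)) := by
          gcongr
          · exact (norm_nonneg _).trans (hmoment k)
          · exact hmoment k
          · exact hA z hz
      _ = 2 * π * r * B * A * R⁻¹ * (R⁻¹ * r) ^ k := by ring
  · have hz' : ‖z‖ = R := by simpa using hz
    rw [circleIntegral.integral_const_mul]
    refine ((hasSum_inv_pow_mul_circleIntegral hr hg (hz'.symm ▸ hrR)).mul_left (f z)).congr_fun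
      fun k => ?_
    ring

theorem circleIntegral_eq_of_differentiableAt_ne_zero (hr : 0 < r) (hR : 0 < R)
    (hf : ∀ z ≠ 0, DifferentiableAt ℂ f z) :
    ∮ z in C(0, R), f z = ∮ z in C(0, r), f z := by
  wlog hrR : r ≤ R generalizing r R
  · exact (this hR hr (le_of_not_ge hrR)).symm
  refine Complex.circleIntegral_eq_of_differentiable_on_annulus_off_countable hr hrR
    Set.countable_empty (fun z hz => (hf z ?_).continuousAt.continuousWithinAt) fun z hz => hf z ?_
  · rintro rfl
    exact hz.2 (Metric.mem_ball_self hr)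
  · rintro rfl
    exact hz.1.2 (Metric.mem_closedBall_self hr.le)

theorem coe_toCircle_two_pi_coe (θ : ℝ) :
    (toCircle (θ : AddCircle (2 * π)) : ℂ) = Complex.exp (θ * Complex.I) := by
  rw [toCircle_apply_mk, div_self Real.two_pi_pos.ne', one_mul, Circle.coe_exp]

theorem circleIntegral_mul_zpow_eq_fourierCoeff (hR : 0 < R)
    (hf : ∀ z ≠ 0, DifferentiableAt ℂ f z) (m : ℤ) :
    ∮ z in C(0, R), f z * z ^ (-m - 1) =
      2 * π * Complex.I *
        fourierCoeff (fun x : AddCircle (2 * π) => f (toCircle x)) m := by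
  have hdiff (z : ℂ) (hz : z ≠ 0) : DifferentiableAt ℂ (fun z => f z * z ^ (-m - 1)) z :=
    (hf z hz).mul (differentiableAt_zpow.2 (Or.inl hz))
  rw [circleIntegral_eq_of_differentiableAt_ne_zero one_pos hR hdiff, circleIntegral,
    fourierCoeff_eq_intervalIntegral _ m 0, Complex.real_smul, ← mul_assoc,
    ← intervalIntegral.integral_const_mul, zero_add]
  congr 1 with θ
  have hexp : Complex.exp ((-m : ℤ) * θ * Complex.I) =
      Complex.exp (θ * Complex.I) * Complex.exp (θ * Complex.I) ^ (-m - 1) := by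
    rw [← Complex.exp_int_mul, ← Complex.exp_add]
    push_cast
    ring_nf
  rw [fourier_two_pi_coe_apply, hexp, coe_toCircle_two_pi_coe, deriv_circleMap, circleMap_zero,
    smul_eq_mul, smul_eq_mul]
  push_cast
  field_simp

end ContourIntegrals

section BesselKernel

/-- The phase `2 sin θ` of the generating function `e^{s(z - 1/z)}`, `z = e^{iθ}`, of the Bessel
functions. -/
noncomputable def besselPhase : C(AddCircle (2 * π), ℝ) where
  toFun x := 2 * (toCircle x : ℂ).im

/-- The derivative `2 cos θ` of `besselPhase`. -/
noncomputable def besselFrequency : C(AddCircle (2 * π), ℝ) where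
  toFun x := 2 * (toCircle x : ℂ).re

/-- The `k`-th Fourier coefficient of `θ ↦ e^{2is sin θ}`, which is the Bessel function value
`J_k(2s)`. -/
noncomputable def besselCoeff (s : ℝ) (k : ℤ) : ℂ := fourierCoeff (oscillatory s besselPhase 1) k

theorem oscillatory_besselPhase_one_apply (s : ℝ) (x : AddCircle (2 * π)) :
    oscillatory s besselPhase 1 x =
      Complex.exp (s * ((toCircle x : ℂ) - (toCircle x : ℂ)⁻¹)) := by
  rw [← Circle.coe_inv, Circle.coe_inv_eq_conj, Complex.sub_conj]
  simp [oscillatory, besselPhase, mul_assoc]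

theorem conj_oscillatory_besselPhase_one_apply (s : ℝ) (x : AddCircle (2 * π)) :
    conj (oscillatory s besselPhase 1 x) =
      Complex.exp (-s * ((toCircle x : ℂ) - (toCircle x : ℂ)⁻¹)) := by
  rw [oscillatory_besselPhase_one_apply, ← Complex.exp_conj, ← Circle.coe_inv,
    Circle.coe_inv_eq_conj]
  simp only [map_mul, map_sub, Complex.conj_ofReal, Complex.conj_conj]
  ring_nf

theorem circleIntegral_exp_mul_zpow (s : ℝ) {R : ℝ} (hR : 0 < R) (m : ℤ) :
    ∮ z in C(0, R), Complex.exp (s * (z - z⁻¹)) * z ^ (-m - 1) =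
      2 * π * Complex.I * besselCoeff s m := by
  rw [circleIntegral_mul_zpow_eq_fourierCoeff hR (fun z hz => by fun_prop (disch := exact hz)),
    besselCoeff]
  simp_rw [← oscillatory_besselPhase_one_apply]

theorem circleIntegral_exp_neg_mul_zpow (s : ℝ) {R : ℝ} (hR : 0 < R) (m : ℤ) :
    ∮ w in C(0, R), Complex.exp (-s * (w - w⁻¹)) * w ^ (m - 1) =
      2 * π * Complex.I * conj (besselCoeff s m) := by
  rw [← neg_neg m, circleIntegral_mul_zpow_eq_fourierCoeff hR
    (fun z hz => by fun_prop (disch := exact hz)), besselCoeff, ← fourierCoeff_conj]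
  simp_rw [conj_oscillatory_besselPhase_one_apply]

theorem besselKernel_eq_circleIntegral_mul_div_sub (a b : ℤ) (ξ : ℝ) :
    besselKernel a b ξ = (2 * π * Complex.I)⁻¹ ^ 2 *
      ∮ z in C(0, 2), ∮ w in C(0, 1 / 2), Complex.exp (√ξ * (z - z⁻¹)) * z ^ (-a - 1) *
        (Complex.exp (-√ξ * (w - w⁻¹)) * w ^ b / (z - w)) := by
  rw [besselKernel]
  congr! 5 with z w
  have hexp : Complex.exp (√ξ * (z - z⁻¹ - w + w⁻¹)) =
      Complex.exp (√ξ * (z - z⁻¹)) * Complex.exp (-√ξ * (w - w⁻¹)) := by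
    rw [← Complex.exp_add]
    ring_nf
  rw [hexp, ← neg_add', zpow_neg, zpow_neg]
  field

theorem continuousOn_sphere_exp_mul_zpow {R : ℝ} (hR : 0 < R) (σ : ℂ) (m : ℤ) :
    ContinuousOn (fun z : ℂ => Complex.exp (σ * (z - z⁻¹)) * z ^ m) (Metric.sphere 0 R) := by
  intro z hz
  have hz0 : z ≠ 0 := ne_zero_of_mem_sphere hR.ne' ⟨z, hz⟩
  have hzpow := continuousAt_zpow₀ z m (.inl hz0)
  exact ContinuousAt.continuousWithinAt (by fun_prop)

theorem hasSum_besselCoeff_mul_conj_besselCoeff (a b : ℤ) (ξ : ℝ) :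
    HasSum (fun k : ℕ => besselCoeff √ξ (a + (k + 1)) * conj (besselCoeff √ξ (b + (k + 1))))
      (besselKernel a b ξ) := by
  rw [besselKernel_eq_circleIntegral_mul_div_sub]
  refine ((hasSum_circleIntegral_mul_circleIntegral one_half_pos.le (by norm_num)
    (continuousOn_sphere_exp_mul_zpow two_pos _ _)
    (continuousOn_sphere_exp_mul_zpow one_half_pos _ _)).mul_left _).congr_fun fun k => ?_
  have hz : ∮ z in C(0, 2), Complex.exp (√ξ * (z - z⁻¹)) * z ^ (-a - 1) * z⁻¹ ^ (k + 1) =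
      2 * π * Complex.I * besselCoeff √ξ (a + (k + 1)) := by
    rw [← circleIntegral_exp_mul_zpow _ two_pos]
    refine circleIntegral.integral_congr two_pos.le fun z hz => ?_
    have hz0 : z ≠ 0 := ne_zero_of_mem_sphere two_ne_zero ⟨z, hz⟩
    rw [mul_assoc, ← zpow_natCast, inv_zpow', ← zpow_add₀ hz0]
    push_cast
    ring_nf
  have hw : ∮ w in C(0, 1 / 2), Complex.exp (-√ξ * (w - w⁻¹)) * w ^ b * w ^ k =
      2 * π * Complex.I * conj (besselCoeff √ξ (b + (k + 1))) := by
    rw [← circleIntegral_exp_neg_mul_zpow _ one_half_pos]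
    refine circleIntegral.integral_congr one_half_pos.le fun w hw => ?_
    have hw0 : w ≠ 0 := ne_zero_of_mem_sphere one_half_pos.ne' ⟨w, hw⟩
    rw [mul_assoc, ← zpow_natCast, ← zpow_add₀ hw0]
    ring_nf
  rw [hz, hw]
  field [Complex.two_pi_I_ne_zero]

theorem fourierCoeff_oscillatory_besselPhase_fourier (s : ℝ) (d k : ℤ) :
    fourierCoeff (oscillatory s besselPhase (fourier d)) k = besselCoeff s (k - d) := by
  rw [besselCoeff, ← fourierCoeff_fourier_mul]
  congr 1 with x
  simp [oscillatory, mul_comm]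

theorem besselKernel_eq_integral_Ioi (a d : ℤ) (ξ : ℝ) :
    besselKernel a (a - d) ξ =
      ∫ k in Set.Ioi a, conj (fourierCoeff (oscillatory √ξ besselPhase (fourier d)) k) *
        fourierCoeff (oscillatory √ξ besselPhase 1) k ∂Measure.count := by
  rw [integral_Ioi_count (integrable_conj_fourierCoeff_mul_fourierCoeff _ _).integrableOn,
    ← (hasSum_besselCoeff_mul_conj_besselCoeff _ _ _).tsum_eq]
  refine tsum_congr fun k => ?_
  rw [fourierCoeff_oscillatory_besselPhase_fourier, ← besselCoeff, mul_comm, sub_add_eq_add_sub]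

theorem besselPhase_coe (θ : ℝ) : besselPhase θ = 2 * Real.sin θ := by
  simp [besselPhase, coe_toCircle_two_pi_coe]

theorem besselFrequency_coe (θ : ℝ) : besselFrequency θ = 2 * Real.cos θ := by
  simp [besselFrequency, coe_toCircle_two_pi_coe]

theorem hasDerivAt_besselPhase (θ : ℝ) :
    HasDerivAt (fun η : ℝ => besselPhase η) (besselFrequency θ) θ := by
  simp_rw [besselPhase_coe, besselFrequency_coe]
  exact (Real.hasDerivAt_sin θ).const_mul 2

theorem haarAddCircle_setOf_besselFrequency_eq (u : ℝ) :
    haarAddCircle {x | besselFrequency x = u} = 0 := by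
  have := nullSingletonClass_haarAddCircle (T := 2 * π)
  refine (Set.toFinite {(Real.arccos (u / 2) : AddCircle (2 * π)),
    -(Real.arccos (u / 2) : AddCircle (2 * π))}).measure_zero _ |> measure_mono_null ?_
  intro x hx
  obtain ⟨θ, rfl⟩ := QuotientAddGroup.mk_surjective x
  have hcos : Real.cos θ = u / 2 := by
    rw [eq_div_iff two_ne_zero, mul_comm, ← besselFrequency_coe]
    exact hx
  refine Real.Angle.cos_eq_iff_coe_eq_or_eq_neg.1 ?_
  rw [← hcos, Real.cos_arccos (Real.neg_one_le_cos θ) (Real.cos_le_one θ)]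

end BesselKernel

section SineKernel

theorem Ioc_inter_setOf_cos_lt_cos {φ : ℝ} (hφ : φ ∈ Set.Icc 0 π) :
    Set.Ioc (-π) π ∩ {θ | Real.cos φ < Real.cos θ} = Set.Ioo (-φ) φ := by
  ext θ
  have hcos (hθ : |θ| ≤ π) : Real.cos φ < Real.cos θ ↔ |θ| < φ := by
    rw [← Real.cos_abs θ, Real.strictAntiOn_cos.lt_iff_gt hφ ⟨abs_nonneg θ, hθ⟩]
  rw [Set.mem_Ioo, ← abs_lt]
  constructor
  · exact fun ⟨hθ, hlt⟩ => (hcos (abs_le.2 ⟨hθ.1.le, hθ.2⟩)).1 hlt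
  · intro hlt
    have hθ := hlt.trans_le hφ.2
    exact ⟨⟨(abs_lt.1 hθ).1, (abs_lt.1 hθ).2.le⟩, (hcos hθ.le).2 hlt⟩

theorem integral_exp_neg_int_mul_eq_Ksin (d : ℤ) (φ : ℝ) :
    ∫ θ in -φ..φ, Complex.exp (-d * θ * Complex.I) = 2 * π * Ksin d φ := by
  have hpi : (π : ℂ) ≠ 0 := Complex.ofReal_ne_zero.2 Real.pi_ne_zero
  rw [Ksin]
  split_ifs with hd
  · subst hd
    simp only [Int.cast_zero, neg_zero, zero_mul, Complex.exp_zero,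
      intervalIntegral.integral_const, sub_neg_eq_add, Complex.real_smul, Complex.ofReal_add,
      mul_one, Complex.ofReal_div]
    field
  · have hd' : (d : ℂ) ≠ 0 := Int.cast_ne_zero.2 hd
    have h := integral_exp_mul_complex (a := -φ) (b := φ) (c := -d * Complex.I) (by simp [hd])
    simp_rw [mul_right_comm]
    rw [h]
    push_cast
    rw [Complex.sin]
    field_simp
    rw [Complex.I_sq, neg_one_mul]

theorem integral_besselFrequency_gt_conj_fourier {φ : ℝ} (hφ : φ ∈ Set.Icc 0 π) (d : ℤ) :
    ∫ x in {x | 2 * Real.cos φ < besselFrequency x}, conj (fourier d x) ∂haarAddCircle =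
      Ksin d φ := by
  have hmeas : MeasurableSet {x | 2 * Real.cos φ < besselFrequency x} :=
    measurableSet_lt measurable_const (by fun_prop)
  have hind (θ : ℝ) :
      {x | 2 * Real.cos φ < besselFrequency x}.indicator (fun x => conj (fourier d x)) θ =
        {η : ℝ | Real.cos φ < Real.cos η}.indicator
          (fun η => Complex.exp (-d * η * Complex.I)) θ := by
    simp_rw [← fourier_neg]
    simp only [Set.indicator, Set.mem_ofPred_eq, besselFrequency_coe,
      mul_lt_mul_iff_right₀ two_pos, fourier_two_pi_coe_apply, Int.cast_neg]
  rw [← integral_indicator hmeas, integral_haarAddCircle, ← AddCircle.integral_preimage _ (-π)]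
  simp_rw [hind]
  rw [setIntegral_indicator (measurableSet_lt measurable_const (by fun_prop)),
    show -π + 2 * π = π by ring, Ioc_inter_setOf_cos_lt_cos hφ,
    ← integral_Ioc_eq_integral_Ioo, ← intervalIntegral.integral_of_le (by linarith [hφ.1]),
    integral_exp_neg_int_mul_eq_Ksin, Complex.real_smul]
  push_cast
  field [Real.pi_ne_zero]

end SineKernel

theorem besselKernel_tendsto_sine_kernel_general {u : ℝ} (hu : u ∈ Set.Icc (-2 : ℝ) 2) {d : ℤ}
    {ξ : ℕ → ℝ} (hξ : Tendsto ξ atTop atTop) {a b : ℕ → ℤ} (hd : ∀ n, a n - b n = d)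
    (ha : Tendsto (fun n => ((a n : ℝ) + 1 / 2) / √(ξ n)) atTop (𝓝 u)) :
    Tendsto (fun n => besselKernel (a n) (b n) (ξ n)) atTop (𝓝 (Ksin d (Real.arccos (u / 2)))) := by
  have hs : Tendsto (fun n => √(ξ n)) atTop atTop := Real.tendsto_sqrt_atTop.comp hξ
  have ha' : Tendsto (fun n => a n / √(ξ n)) atTop (𝓝 u) := by
    simpa [add_div] using ha.sub (hs.const_div_atTop (1 / 2))
  have hb (n : ℕ) : b n = a n - d := by rw [← hd n, sub_sub_cancel]
  have hcos : 2 * Real.cos (Real.arccos (u / 2)) = u := by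
    rw [Real.cos_arccos (by linarith [hu.1]) (by linarith [hu.2])]
    ring
  rw [← integral_besselFrequency_gt_conj_fourier ⟨Real.arccos_nonneg _, Real.arccos_le_pi _⟩, hcos]
  simp_rw [hb, besselKernel_eq_integral_Ioi]
  simpa using tendsto_integral_Ioi_conj_fourierCoeff_oscillatory_mul hs ha'
    hasDerivAt_besselPhase (haarAddCircle_setOf_besselFrequency_eq u) (fourier d) 1

/-- Bulk asymptotics of the discrete Bessel kernel: the discrete sine kernel.
Half-integers `xₙ = aₙ + 1/2`, `yₙ = bₙ + 1/2` are encoded by integers. -/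
theorem besselKernel_tendsto_sine_kernel
    (u : ℝ) (hu : u ∈ Set.Ioo (-2 : ℝ) 2) (d : ℤ)
    (ξ : ℕ → ℝ) (hpos : ∀ n, 0 < ξ n) (hξ : Tendsto ξ atTop atTop)
    (a b : ℕ → ℤ) (hd : ∀ n, a n - b n = d)
    (ha : Tendsto (fun n => ((a n : ℝ) + 1/2) / Real.sqrt (ξ n)) atTop (𝓝 u)) :
    Tendsto (fun n => besselKernel (a n) (b n) (ξ n)) atTop
      (𝓝 ((Ksin d (Real.arccos (u / 2)) : ℝ) : ℂ)) :=
  besselKernel_tendsto_sine_kernel_general (Set.Ioo_subset_Icc_self hu) hξ hd ha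
end

section
/- Let x ≠ y be real numbers, let ξₙ → ∞ be a sequence of positive reals, and let aₙ, bₙ ∈ ℤ + 1/2 satisfy (aₙ − 2√ξₙ)/ξₙ^{1/6} → x and (bₙ − 2√ξₙ)/ξₙ^{1/6} → y. Then ξₙ^{1/6} · K_Bessel(aₙ, bₙ; ξₙ) → K_Airy(x, y) as n → ∞. -/
open Filter Topology

/-- The Airy function `Ai(x) = (1/π) ∫₀^∞ cos(s³/3 + sx) ds`, the improper
integral being the limit of `∫₀^T` as `T → ∞`. -/
noncomputable def Ai (x : ℝ) : ℝ :=
  (1 / Real.pi) *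
    limUnder atTop fun T : ℝ => ∫ s in (0 : ℝ)..T, Real.cos (s ^ 3 / 3 + s * x)

/-- The Airy kernel `K_Airy(x, y) = (Ai(x) Ai'(y) - Ai'(x) Ai(y))/(x - y)` for
`x ≠ y`, and `K_Airy(y, y) = Ai'(y)² - y Ai(y)²` on the diagonal. -/
noncomputable def KAiry (x y : ℝ) : ℝ :=
  if x = y then (deriv Ai y) ^ 2 - y * (Ai y) ^ 2
  else (Ai x * deriv Ai y - deriv Ai x * Ai y) / (x - y)

/-!
The kernel is of Christoffel–Darboux type: with `J_N = J_N(2√ξ)`,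
`(a - b) K(a, b) = √ξ (J_a J_{b+1} - J_{a+1} J_b)`. Indeed `K(a, b) - K(a + 1, b + 1)` is the
product `J_{a+1} J_{b+1}`, the three-term recurrence of the Bessel functions gives the same
increment on the right-hand side, and everything vanishes as `(a, b)` is shifted to infinity.

Put `L = ξ^{1/6}`. On the circle of radius `exp (1 / L)`, parametrised by the angle `u / L`,
`L J_N(2L³)` becomes `(2π)⁻¹ ∫ exp (2 L³ sinh (ω / L) - N ω / L) du` with `ω = 1 + iu`. If
`(N - 2 L³) / L → x`, the exponent tends to `ω³ / 3 - x ω`, and dominated convergence yields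
`L J_N → Ai x` and `L² (J_{N+1} - J_N) → Ai' x`, which turn the Christoffel–Darboux form into the
Airy kernel.
-/

open Complex MeasureTheory Metric
open scoped Real

section Elementary

lemma re_sinh_ofReal_add_mul_I (x y : ℝ) :
    (sinh (x + y * I)).re = Real.sinh x * Real.cos y := by
  rw [sinh_add, sinh_mul_I, cosh_mul_I, ← ofReal_sinh, ← ofReal_cosh, ← ofReal_cos, ← ofReal_sin,
    ← mul_assoc, ← ofReal_mul, ← ofReal_mul, add_re, re_ofReal_mul, I_re, ofReal_re, mul_zero,
    add_zero]

lemma norm_sinh_sub_self_sub_cube_le {z : ℂ} (hz : ‖z‖ ≤ 1) :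
    ‖sinh z - z - z ^ 3 / 6‖ ≤ ‖z‖ ^ 4 := by
  set remainder : ℂ → ℂ := fun z => exp z - ∑ m ∈ Finset.range 4, z ^ m / m.factorial
  have remainder_le {z : ℂ} (hz : ‖z‖ ≤ 1) : ‖remainder z‖ ≤ ‖z‖ ^ 4 := by
    refine (exp_bound hz four_pos).trans (mul_le_of_le_one_right (by positivity) ?_)
    norm_num [Nat.factorial]
  have sinh_eq : sinh z - z - z ^ 3 / 6 = (remainder z - remainder (-z)) / 2 := by
    simp only [remainder, Finset.sum_range_succ, Finset.sum_range_zero, Nat.factorial, sinh]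
    push_cast
    ring
  have remainder_neg_le := remainder_le ((norm_neg z).trans_le hz)
  rw [norm_neg] at remainder_neg_le
  rw [sinh_eq, norm_div, RCLike.norm_ofNat, div_le_iff₀ two_pos]
  linarith [norm_sub_le (remainder z) (remainder (-z)), remainder_le hz]

lemma sinh_le_self_add_two_mul_cube {t : ℝ} (h0 : 0 ≤ t) (h1 : t ≤ 1) :
    Real.sinh t ≤ t + 2 * t ^ 3 := by
  have taylor := norm_sinh_sub_self_sub_cube_le (z := t) (by simpa [abs_of_nonneg h0] using h1)
  rw [show sinh t - t - (t : ℂ) ^ 3 / 6 = (Real.sinh t - t - t ^ 3 / 6 : ℝ) by push_cast; ring,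
    norm_real, norm_real, Real.norm_eq_abs, Real.norm_of_nonneg h0] at taylor
  have pow_four_le : t ^ 4 ≤ t ^ 3 := pow_le_pow_of_le_one h0 h1 (by norm_num)
  linarith [(abs_le.1 taylor).2, pow_nonneg h0 3]

lemma norm_exp_sub_one_le_norm_mul_exp_norm (z : ℂ) : ‖exp z - 1‖ ≤ ‖z‖ * Real.exp ‖z‖ := by
  simpa using norm_exp_sub_sum_le_norm_mul_exp z 1

lemma integrable_one_add_abs_mul_exp_neg_mul_sq {c : ℝ} (hc : 0 < c) :
    Integrable fun u : ℝ => (1 + |u|) * Real.exp (-c * u ^ 2) := by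
  refine ((integrable_exp_neg_mul_sq hc).add (integrable_mul_exp_neg_mul_sq hc).norm).congr
    (.of_forall fun u => ?_)
  simp [add_mul]

end Elementary

section CircleIntegral

variable {E : Type*} [NormedAddCommGroup E] [NormedSpace ℂ E] {c d : ℂ} {R r : ℝ}

lemma circleIntegrable_circleIntegral {f : ℂ → ℂ → E} (hR : 0 ≤ R) (hr : 0 ≤ r)
    (hf : ContinuousOn (Function.uncurry f) (sphere c R ×ˢ sphere d r)) :
    CircleIntegrable (fun z => ∮ w in C(d, r), f z w) c R := by
  have f_circleMap : Continuous fun p : ℝ × ℝ => f (circleMap c R p.1) (circleMap d r p.2) :=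
    hf.comp_continuous (((continuous_circleMap c R).comp continuous_fst).prodMk
      ((continuous_circleMap d r).comp continuous_snd))
        fun p => ⟨circleMap_mem_sphere c hR p.1, circleMap_mem_sphere d hr p.2⟩
  refine Continuous.intervalIntegrable ?_ _ _
  simp only [circleIntegral, deriv_circleMap]
  exact intervalIntegral.continuous_parametric_intervalIntegral_of_continuous'
    ((((continuous_circleMap 0 r).comp continuous_snd).mul continuous_const).smul f_circleMap) _ _

lemma norm_circleIntegral_circleIntegral_le {f : ℂ → ℂ → E} {C : ℝ} (hR : 0 ≤ R) (hr : 0 ≤ r)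
    (hf : ∀ z ∈ sphere c R, ∀ w ∈ sphere d r, ‖f z w‖ ≤ C) :
    ‖∮ z in C(c, R), ∮ w in C(d, r), f z w‖ ≤ 2 * π * R * (2 * π * r * C) :=
  circleIntegral.norm_integral_le_of_norm_le_const hR fun z hz =>
    circleIntegral.norm_integral_le_of_norm_le_const hr (hf z hz)

end CircleIntegral

section BesselFunction

/-- The generating function `exp (t / 2 * (z - 1 / z))` of the Bessel functions `J_N(t)`, times
`z ^ m`. -/
noncomputable def besselIntegrand (t : ℂ) (m : ℤ) (z : ℂ) : ℂ :=
  exp (t / 2 * (z - z⁻¹)) * z ^ m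

/-- The Bessel function `J_N(t)` of the first kind of integer order, defined as the Laurent
coefficient of `z ^ N` in `exp (t / 2 * (z - 1 / z))`. -/
noncomputable def besselJ (N : ℤ) (t : ℂ) : ℂ :=
  (2 * π * I)⁻¹ * ∮ z in C(0, 1), besselIntegrand t (-N - 1) z

variable {z : ℂ}

lemma hasDerivAt_besselIntegrand (t : ℂ) (m : ℤ) (hz : z ≠ 0) :
    HasDerivAt (besselIntegrand t m)
      (t / 2 * (besselIntegrand t m z + besselIntegrand t (m - 2) z)
        + m * besselIntegrand t (m - 1) z) z := by
  have exponent : HasDerivAt (fun z : ℂ => t / 2 * (z - z⁻¹)) (t / 2 * (1 - -(z ^ 2)⁻¹)) z :=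
    ((hasDerivAt_id z).sub (hasDerivAt_inv hz)).const_mul _
  refine (exponent.cexp.mul (hasDerivAt_zpow m z (Or.inl hz))).congr_deriv ?_
  simp only [besselIntegrand, zpow_sub₀ hz, zpow_ofNat]
  field_simp
  ring

lemma circleIntegrable_besselIntegrand (t : ℂ) (m : ℤ) {r : ℝ} (hr : 0 < r) :
    CircleIntegrable (besselIntegrand t m) 0 r :=
  ContinuousOn.circleIntegrable hr.le fun _ hz =>
    (hasDerivAt_besselIntegrand t m (ne_of_mem_sphere hz hr.ne')).continuousAt.continuousWithinAt

lemma circleIntegral_besselIntegrand_eq_of_le (t : ℂ) (m : ℤ) {r R : ℝ} (hr : 0 < r)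
    (hrR : r ≤ R) :
    ∮ z in C(0, R), besselIntegrand t m z = ∮ z in C(0, r), besselIntegrand t m z := by
  have differentiableAt {z : ℂ} (hz : z ≠ 0) : DifferentiableAt ℂ (besselIntegrand t m) z :=
    (hasDerivAt_besselIntegrand t m hz).differentiableAt
  refine circleIntegral_eq_of_differentiable_on_annulus_off_countable hr hrR
    Set.countable_empty (fun z hz => ?_) fun z hz => differentiableAt ?_
  · refine (differentiableAt ?_).continuousAt.continuousWithinAt
    rintro rfl
    exact hz.2 (mem_ball_self hr)
  · rintro rfl
    exact hz.1.2 (mem_closedBall_self hr.le)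

lemma besselJ_eq_circleIntegral (N : ℤ) (t : ℂ) {r : ℝ} (hr : 0 < r) :
    besselJ N t = (2 * π * I)⁻¹ * ∮ z in C(0, r), besselIntegrand t (-N - 1) z := by
  rw [besselJ]
  congr 1
  rcases le_total r 1 with h | h
  · exact circleIntegral_besselIntegrand_eq_of_le _ _ hr h
  · exact (circleIntegral_besselIntegrand_eq_of_le _ _ one_pos h).symm

lemma circleIntegral_besselIntegrand (t : ℂ) (m : ℤ) {r : ℝ} (hr : 0 < r) :
    ∮ z in C(0, r), besselIntegrand t m z = 2 * π * I * besselJ (-m - 1) t := by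
  rw [besselJ_eq_circleIntegral _ _ hr, mul_inv_cancel_left₀ two_pi_I_ne_zero]
  congr! 3
  ring

lemma exp_mul_besselIntegrand_exp (t ζ : ℂ) (N : ℤ) :
    exp ζ * besselIntegrand t (-N - 1) (exp ζ) = exp (t * sinh ζ - N * ζ) := by
  rw [besselIntegrand, ← exp_neg, ← exp_int_mul, ← exp_add, ← exp_add, sinh]
  congr 1
  push_cast
  ring

lemma besselJ_eq_integral_exp_sinh (N : ℤ) (t : ℂ) (ρ : ℝ) :
    besselJ N t =
      (2 * π : ℂ)⁻¹ * ∫ θ in (-π)..π, exp (t * sinh (ρ + θ * I) - N * (ρ + θ * I)) := by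
  set g : ℝ → ℂ := fun θ => exp (t * sinh (ρ + θ * I) - N * (ρ + θ * I))
  have circleMap_eq (θ : ℝ) : circleMap 0 (Real.exp ρ) θ = exp (ρ + θ * I) := by
    simp [circleMap, exp_add]
  have integrand_eq (θ : ℝ) : circleMap 0 (Real.exp ρ) θ *
      besselIntegrand t (-N - 1) (circleMap 0 (Real.exp ρ) θ) = g θ := by
    rw [circleMap_eq, exp_mul_besselIntegrand_exp]
  have periodic : Function.Periodic g (2 * π) := fun θ => by
    rw [← integrand_eq, ← integrand_eq, periodic_circleMap]
  have integral_eq : ∫ θ in 0..(2 * π), g θ = ∫ θ in (-π)..π, g θ := by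
    convert periodic.intervalIntegral_add_eq 0 (-π) using 2 <;> ring
  rw [besselJ_eq_circleIntegral N t (Real.exp_pos ρ), ← integral_eq]
  simp only [circleIntegral, deriv_circleMap, smul_eq_mul, mul_right_comm _ I, integrand_eq]
  rw [intervalIntegral.integral_mul_const]
  field_simp

lemma besselJ_neg_neg (N : ℤ) (t : ℂ) : besselJ (-N) (-t) = besselJ N t := by
  rw [besselJ_eq_integral_exp_sinh _ _ 0, besselJ_eq_integral_exp_sinh N t 0]
  congr 1
  convert intervalIntegral.integral_comp_neg (a := -π) (b := π)
    (fun θ : ℝ => exp (t * sinh ((0 : ℝ) + θ * I) - N * ((0 : ℝ) + θ * I))) using 3 <;> simp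

lemma mul_besselJ (N : ℤ) (t : ℂ) :
    N * besselJ N t = t / 2 * (besselJ (N - 1) t + besselJ (N + 1) t) := by
  have integrable_const_mul (c : ℂ) (m : ℤ) :
      CircleIntegrable (fun z => c * besselIntegrand t m z) 0 1 :=
    (circleIntegrable_besselIntegrand t m one_pos).const_smul
  have integral_deriv : ∮ z in C(0, 1), ((t / 2 * besselIntegrand t (-N) z
      + t / 2 * besselIntegrand t (-N - 2) z) - N * besselIntegrand t (-N - 1) z) = 0 := by
    refine circleIntegral.integral_eq_zero_of_hasDerivWithinAt zero_le_one fun z hz =>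
      ((hasDerivAt_besselIntegrand t (-N) (ne_of_mem_sphere hz one_ne_zero)).congr_deriv
        ?_).hasDerivWithinAt
    push_cast
    ring
  have integrable_add : CircleIntegrable
      (fun z => t / 2 * besselIntegrand t (-N) z + t / 2 * besselIntegrand t (-N - 2) z) 0 1 :=
    (integrable_const_mul _ _).add (integrable_const_mul _ _)
  rw [circleIntegral.integral_sub integrable_add (integrable_const_mul _ _),
    circleIntegral.integral_add (integrable_const_mul _ _) (integrable_const_mul _ _)]
    at integral_deriv
  simp only [circleIntegral.integral_const_mul, circleIntegral_besselIntegrand t _ one_pos]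
    at integral_deriv
  rw [show -(-N) - 1 = N - 1 by ring, show -(-N - 2) - 1 = N + 1 by ring,
    show -(-N - 1) - 1 = N by ring] at integral_deriv
  refine mul_left_cancel₀ two_pi_I_ne_zero ?_
  linear_combination -integral_deriv

lemma sub_mul_besselJ_mul_besselJ (M N : ℤ) (t : ℂ) :
    (M - N) * (besselJ M t * besselJ N t) =
      t / 2 * (besselJ (M - 1) t * besselJ N t - besselJ M t * besselJ (N - 1) t)
        - t / 2 * (besselJ M t * besselJ (N + 1) t - besselJ (M + 1) t * besselJ N t) := by
  linear_combination besselJ N t * mul_besselJ M t - besselJ M t * mul_besselJ N t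

end BesselFunction

section BesselKernel

/-- The integrand of the discrete Bessel kernel, with a complex parameter `s` in place of `√ξ`. -/
noncomputable def besselKernelIntegrand (a b : ℤ) (s z w : ℂ) : ℂ :=
  exp (s * (z - z⁻¹ - w + w⁻¹)) / ((z - w) * z ^ (a + 1) * w ^ (-b))

lemma besselKernel_eq (a b : ℤ) (ξ : ℝ) :
    besselKernel a b ξ = (2 * π * I)⁻¹ ^ 2 *
      ∮ z in C(0, 2), ∮ w in C(0, 1 / 2), besselKernelIntegrand a b √ξ z w := rfl

variable {z w : ℂ}

lemma besselKernelIntegrand_sub_besselKernelIntegrand_add_one (a b : ℤ) (s : ℂ) (hz : z ≠ 0)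
    (hw : w ≠ 0) (hzw : z ≠ w) :
    besselKernelIntegrand a b s z w - besselKernelIntegrand (a + 1) (b + 1) s z w =
      besselIntegrand (2 * s) (-a - 2) z * besselIntegrand (-(2 * s)) b w := by
  have sub_ne : z - w ≠ 0 := sub_ne_zero.2 hzw
  have exp_eq : exp (s * (z - z⁻¹ - w + w⁻¹)) =
      exp (2 * s / 2 * (z - z⁻¹)) * exp (-(2 * s) / 2 * (w - w⁻¹)) := by
    rw [← exp_add]
    ring_nf
  simp only [besselKernelIntegrand, besselIntegrand, exp_eq, zpow_add₀ hz, zpow_add₀ hw,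
    zpow_sub₀ hz, zpow_neg, zpow_ofNat, neg_add]
  field_simp

lemma besselKernelIntegrand_add_natCast (a b : ℤ) (s : ℂ) (n : ℕ) (hz : z ≠ 0) (hw : w ≠ 0) :
    besselKernelIntegrand (a + n) (b + n) s z w =
      besselKernelIntegrand a b s z w * (w / z) ^ n := by
  simp only [besselKernelIntegrand, zpow_add₀ hz, zpow_add₀ hw, zpow_neg, zpow_natCast, neg_add,
    div_pow]
  field_simp

lemma ne_of_mem_sphere_two_of_mem_sphere_half (hz : z ∈ sphere (0 : ℂ) 2)
    (hw : w ∈ sphere (0 : ℂ) (1 / 2)) : z ≠ 0 ∧ w ≠ 0 ∧ z ≠ w := by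
  refine ⟨ne_of_mem_sphere hz two_ne_zero, ne_of_mem_sphere hw (by norm_num), ?_⟩
  rintro rfl
  norm_num [mem_sphere_zero_iff_norm.1 hz] at hw

lemma continuousOn_besselKernelIntegrand (a b : ℤ) (s : ℂ) :
    ContinuousOn (Function.uncurry (besselKernelIntegrand a b s))
      (sphere 0 2 ×ˢ sphere 0 (1 / 2)) := by
  rintro p ⟨hz, hw⟩
  obtain ⟨hz, hw, hzw⟩ := ne_of_mem_sphere_two_of_mem_sphere_half hz hw
  have denominator_ne : (p.1 - p.2) * p.1 ^ (a + 1) * p.2 ^ (-b) ≠ 0 :=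
    mul_ne_zero (mul_ne_zero (sub_ne_zero.2 hzw) (zpow_ne_zero _ hz)) (zpow_ne_zero _ hw)
  refine ContinuousAt.continuousWithinAt ?_
  unfold besselKernelIntegrand Function.uncurry
  fun_prop (disch := simp_all)

lemma besselKernel_sub_besselKernel_add_one (a b : ℤ) (ξ : ℝ) :
    besselKernel a b ξ - besselKernel (a + 1) (b + 1) ξ =
      besselJ (a + 1) (2 * √ξ) * besselJ (b + 1) (2 * √ξ) := by
  have continuousOn (a b : ℤ) := continuousOn_besselKernelIntegrand a b √ξ
  have integrable_inner (a b : ℤ) {z : ℂ} (hz : z ∈ sphere (0 : ℂ) 2) :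
      CircleIntegrable (besselKernelIntegrand a b √ξ z) 0 (1 / 2) :=
    ((continuousOn a b).comp (by fun_prop : ContinuousOn (fun w => (z, w)) _)
      fun _ hw => ⟨hz, hw⟩).circleIntegrable (by norm_num)
  have integrable_outer (a b : ℤ) := circleIntegrable_circleIntegral zero_le_two
    (by norm_num) (continuousOn a b)
  have inner_sub : Set.EqOn
      (fun z => (∮ w in C(0, 1 / 2), besselKernelIntegrand a b √ξ z w) -
        ∮ w in C(0, 1 / 2), besselKernelIntegrand (a + 1) (b + 1) √ξ z w)
      (fun z => 2 * π * I * besselJ (b + 1) (2 * √ξ) * besselIntegrand (2 * √ξ) (-a - 2) z)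
      (sphere 0 2) := by
    intro z hz
    simp only
    rw [← circleIntegral.integral_sub (integrable_inner _ _ hz) (integrable_inner _ _ hz),
      circleIntegral.integral_congr (by norm_num) fun w hw => by
        obtain ⟨hz, hw, hzw⟩ := ne_of_mem_sphere_two_of_mem_sphere_half hz hw
        exact besselKernelIntegrand_sub_besselKernelIntegrand_add_one a b √ξ hz hw hzw,
      circleIntegral.integral_const_mul, circleIntegral_besselIntegrand _ _ (by norm_num),
      ← besselJ_neg_neg (b + 1)]
    ring_nf
  rw [besselKernel_eq, besselKernel_eq, ← mul_sub,
    ← circleIntegral.integral_sub (integrable_outer _ _) (integrable_outer _ _),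
    circleIntegral.integral_congr zero_le_two inner_sub, circleIntegral.integral_const_mul,
    circleIntegral_besselIntegrand _ _ two_pos, show -(-a - 2) - 1 = a + 1 by ring]
  field_simp

lemma tendsto_besselJ_add_natCast (N : ℤ) (t : ℂ) :
    Tendsto (fun n : ℕ => besselJ (N + n) t) atTop (𝓝 0) := by
  obtain ⟨C, hC⟩ := (isCompact_sphere (0 : ℂ) 2).exists_bound_of_continuousOn fun z hz =>
    (hasDerivAt_besselIntegrand t (-N - 1)
      (ne_of_mem_sphere hz two_ne_zero)).continuousAt.continuousWithinAt
  have norm_le (n : ℕ) : ‖besselJ (N + n) t‖ ≤ 2 * (C * (1 / 2) ^ n) := by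
    rw [besselJ_eq_circleIntegral _ _ two_pos]
    refine circleIntegral.norm_two_pi_i_inv_smul_integral_le_of_norm_le_const zero_le_two
      fun z hz => ?_
    have integrand_eq : besselIntegrand t (-(N + n) - 1) z =
        besselIntegrand t (-N - 1) z * z⁻¹ ^ n := by
      rw [besselIntegrand, besselIntegrand, mul_assoc, inv_pow, ← zpow_natCast, ← zpow_neg,
        ← zpow_add₀ (ne_of_mem_sphere hz two_ne_zero)]
      ring_nf
    rw [integrand_eq, norm_mul, norm_pow, norm_inv, mem_sphere_zero_iff_norm.1 hz, one_div]
    gcongr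
    exact hC z hz
  refine squeeze_zero_norm norm_le ?_
  simpa using ((tendsto_pow_atTop_nhds_zero_of_lt_one (r := (1 / 2 : ℝ)) (by norm_num)
    (by norm_num)).const_mul C).const_mul 2

lemma tendsto_besselKernel_add_natCast (a b : ℤ) (ξ : ℝ) :
    Tendsto (fun n : ℕ => besselKernel (a + n) (b + n) ξ) atTop (𝓝 0) := by
  obtain ⟨C, hC⟩ := ((isCompact_sphere (0 : ℂ) 2).prod
    (isCompact_sphere (0 : ℂ) (1 / 2))).exists_bound_of_continuousOn
      (continuousOn_besselKernelIntegrand a b √ξ)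
  have norm_integrand_le (n : ℕ) (z : ℂ) (hz : z ∈ sphere 0 2) (w : ℂ)
      (hw : w ∈ sphere 0 (1 / 2)) :
      ‖besselKernelIntegrand (a + n) (b + n) √ξ z w‖ ≤ C * (1 / 4) ^ n := by
    obtain ⟨hz0, hw0, -⟩ := ne_of_mem_sphere_two_of_mem_sphere_half hz hw
    have norm_ratio : ‖w / z‖ = 1 / 4 := by
      rw [norm_div, mem_sphere_zero_iff_norm.1 hz, mem_sphere_zero_iff_norm.1 hw]
      norm_num
    rw [besselKernelIntegrand_add_natCast _ _ _ _ hz0 hw0, norm_mul, norm_pow, norm_ratio]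
    gcongr
    exact hC (z, w) ⟨hz, hw⟩
  have integral_tendsto : Tendsto (fun n : ℕ => ∮ z in C(0, 2), ∮ w in C(0, 1 / 2),
      besselKernelIntegrand (a + n) (b + n) √ξ z w) atTop (𝓝 0) := by
    refine squeeze_zero_norm (fun n => norm_circleIntegral_circleIntegral_le zero_le_two
      (by norm_num) (norm_integrand_le n)) ?_
    simpa using (((tendsto_pow_atTop_nhds_zero_of_lt_one (r := (1 / 4 : ℝ)) (by norm_num)
      (by norm_num)).const_mul C).const_mul (2 * π * (1 / 2))).const_mul (2 * π * 2)
  simpa only [besselKernel_eq, mul_zero] using integral_tendsto.const_mul _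

-- Both sides change by the same amount under `(a, b) ↦ (a + 1, b + 1)`, by the three-term
-- recurrence, and both tend to `0` under iteration.
lemma sub_mul_besselKernel (a b : ℤ) (ξ : ℝ) :
    (a - b) * besselKernel a b ξ =
      √ξ * (besselJ a (2 * √ξ) * besselJ (b + 1) (2 * √ξ)
        - besselJ (a + 1) (2 * √ξ) * besselJ b (2 * √ξ)) := by
  set J : ℤ → ℂ := fun N => besselJ N (2 * √ξ)
  set defect : ℤ → ℤ → ℂ := fun a b =>
    (a - b) * besselKernel a b ξ - √ξ * (J a * J (b + 1) - J (a + 1) * J b)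
  have defect_add_one (a b : ℤ) : defect (a + 1) (b + 1) = defect a b := by
    have kernel_step := besselKernel_sub_besselKernel_add_one a b ξ
    have casorati_step := sub_mul_besselJ_mul_besselJ (a + 1) (b + 1) (2 * √ξ)
    simp only [add_sub_cancel_right] at casorati_step
    push_cast at casorati_step
    simp only [defect, J]
    push_cast
    linear_combination -casorati_step - (a - b) * kernel_step
  have defect_add_natCast (n : ℕ) : defect (a + n) (b + n) = defect a b := by
    induction n with
    | zero => simp
    | succ n ih => rw [Nat.cast_succ, ← add_assoc, ← add_assoc, defect_add_one, ih]
  have J_tendsto (N : ℤ) : Tendsto (fun n : ℕ => J (N + n)) atTop (𝓝 0) :=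
    tendsto_besselJ_add_natCast N _
  have defect_tendsto : Tendsto (fun n : ℕ => defect (a + n) (b + n)) atTop (𝓝 0) := by
    simpa [defect, add_right_comm] using
      ((tendsto_besselKernel_add_natCast a b ξ).const_mul ((a : ℂ) - b)).sub
        ((((J_tendsto a).mul (J_tendsto (b + 1))).sub
          ((J_tendsto (a + 1)).mul (J_tendsto b))).const_mul (√ξ : ℂ))
  simp only [defect_add_natCast] at defect_tendsto
  exact sub_eq_zero.1 (tendsto_nhds_unique tendsto_const_nhds defect_tendsto)

end BesselKernel

section Airy

/-- The integrand of the contour integral for the Airy function, in the convention in which the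
contour is a vertical line in the right half-plane. -/
noncomputable def airyIntegrand (x : ℝ) (w : ℂ) : ℂ := exp (w ^ 3 / 3 - x * w)

/-- The parametrisation of the vertical line `re w = 1`, on which `airyIntegrand` has Gaussian
decay. -/
noncomputable def airyContour (u : ℝ) : ℂ := 1 + u * I

lemma continuous_airyIntegrand (x : ℝ) : Continuous (airyIntegrand x) := by
  unfold airyIntegrand
  fun_prop

@[fun_prop]
lemma continuous_airyContour : Continuous airyContour := by
  unfold airyContour
  fun_prop

lemma norm_airyContour_le (u : ℝ) : ‖airyContour u‖ ≤ 1 + |u| :=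
  (norm_add_le _ _).trans_eq (by simp)

lemma norm_airyIntegrand (x t u : ℝ) :
    ‖airyIntegrand x (t + u * I)‖ = Real.exp (t ^ 3 / 3 - t * u ^ 2 - x * t) := by
  have exponent_eq : ((t : ℂ) + u * I) ^ 3 / 3 - x * (t + u * I) =
      (t ^ 3 / 3 - t * u ^ 2 - x * t : ℝ) + (t ^ 2 * u - u ^ 3 / 3 - x * u : ℝ) * I := by
    push_cast
    linear_combination (t * u ^ 2 + u ^ 3 * I / 3) * I_sq
  rw [airyIntegrand, norm_exp, exponent_eq, add_re, ofReal_re, re_ofReal_mul, I_re, mul_zero,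
    add_zero]

lemma norm_airyIntegrand_airyContour (x u : ℝ) :
    ‖airyIntegrand x (airyContour u)‖ = Real.exp (1 / 3 - x) * Real.exp (-1 * u ^ 2) := by
  rw [airyContour, ← ofReal_one, norm_airyIntegrand, ← Real.exp_add]
  ring_nf

lemma continuous_airyIntegrand_airyContour (x : ℝ) :
    Continuous fun u => airyIntegrand x (airyContour u) :=
  (continuous_airyIntegrand x).comp continuous_airyContour

lemma integrable_airyIntegrand_airyContour (x : ℝ) :
    Integrable fun u => airyIntegrand x (airyContour u) :=
  ((integrable_exp_neg_mul_sq one_pos).const_mul (Real.exp (1 / 3 - x))).mono'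
    (continuous_airyIntegrand_airyContour x).aestronglyMeasurable
    (.of_forall fun u => (norm_airyIntegrand_airyContour x u).le)

lemma hasDerivAt_airyIntegrand (x : ℝ) (w : ℂ) :
    HasDerivAt (fun x : ℝ => airyIntegrand x w) (-w * airyIntegrand x w) x := by
  have exponent : HasDerivAt (fun x : ℝ => w ^ 3 / 3 - x * w) (-(1 * w)) x :=
    (ofRealCLM.hasDerivAt.mul_const w).const_sub _
  exact exponent.cexp.congr_deriv (by rw [airyIntegrand]; ring)

lemma hasDerivAt_integral_airyIntegrand (x : ℝ) :
    HasDerivAt (fun x => ∫ u, airyIntegrand x (airyContour u))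
      (∫ u, -airyContour u * airyIntegrand x (airyContour u)) x := by
  refine (hasDerivAt_integral_of_dominated_loc_of_deriv_le
    (F' := fun x u => -airyContour u * airyIntegrand x (airyContour u))
    (bound := fun u => Real.exp (1 / 3 - (x - 1)) * ((1 + |u|) * Real.exp (-1 * u ^ 2)))
    (Ioi_mem_nhds (sub_one_lt x))
    (.of_forall fun y => (continuous_airyIntegrand_airyContour y).aestronglyMeasurable)
    (integrable_airyIntegrand_airyContour x)
    (continuous_airyContour.neg.mul
      (continuous_airyIntegrand_airyContour x)).aestronglyMeasurable
    (.of_forall fun u y hy => ?_)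
    ((integrable_one_add_abs_mul_exp_neg_mul_sq one_pos).const_mul _)
    (.of_forall fun u y _ => hasDerivAt_airyIntegrand y _)).2
  rw [norm_mul, norm_neg, norm_airyIntegrand_airyContour, mul_left_comm]
  gcongr
  · exact (Set.mem_Ioi.1 hy).le
  · exact norm_airyContour_le u

lemma tendsto_integral_airyIntegrand_horizontal (x : ℝ) {ι : Type*} {l : Filter ι}
    [l.IsCountablyGenerated] {T : ι → ℝ} (hT : Tendsto (fun i => T i ^ 2) l atTop) :
    Tendsto (fun i => ∫ t in (0 : ℝ)..1, airyIntegrand x (t + T i * I)) l (𝓝 0) := by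
  rw [← intervalIntegral.integral_zero (E := ℂ) (μ := volume) (a := 0) (b := 1)]
  refine intervalIntegral.tendsto_integral_filter_of_dominated_convergence
    (fun _ => Real.exp (1 + |x|)) (.of_forall fun i => ?_) ?_ ?_ ?_
  · exact ((continuous_airyIntegrand x).comp (by fun_prop)).aestronglyMeasurable
  · refine .of_forall fun i => .of_forall fun t ht => ?_
    rw [Set.uIoc_of_le zero_le_one] at ht
    rw [norm_airyIntegrand, Real.exp_le_exp]
    have cube_le : t ^ 3 ≤ 1 := pow_le_one₀ ht.1.le ht.2
    have linear_le : -(x * t) ≤ |x| := calc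
      -(x * t) ≤ |x| * |t| := (neg_le_abs _).trans_eq (abs_mul x t)
      _ ≤ |x| := mul_le_of_le_one_right (abs_nonneg x) ((abs_of_pos ht.1).trans_le ht.2)
    have quadratic_nonneg : 0 ≤ t * T i ^ 2 := mul_nonneg ht.1.le (sq_nonneg _)
    linarith
  · exact intervalIntegrable_const
  · refine .of_forall fun t ht => ?_
    rw [Set.uIoc_of_le zero_le_one] at ht
    rw [tendsto_zero_iff_norm_tendsto_zero]
    simp only [norm_airyIntegrand]
    refine Real.tendsto_exp_atBot.comp ?_
    refine (tendsto_atBot_add_const_left l (t ^ 3 / 3 - x * t)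
      (tendsto_neg_atTop_atBot.comp (hT.const_mul_atTop ht.1))).congr fun i => ?_
    simp only [Function.comp_apply]
    ring

lemma integral_airyIntegrand_mul_I (x T : ℝ) :
    ∫ u in (-T)..T, airyIntegrand x (u * I) =
      (∫ u in (-T)..T, airyIntegrand x (airyContour u))
        - I * ((∫ t in (0 : ℝ)..1, airyIntegrand x (t + (-T : ℝ) * I))
          - ∫ t in (0 : ℝ)..1, airyIntegrand x (t + T * I)) := by
  have cauchy := integral_boundary_rect_eq_zero_of_differentiableOn (airyIntegrand x)
    ⟨0, -T⟩ ⟨1, T⟩ (by unfold airyIntegrand; fun_prop)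
  simp only [smul_eq_mul, ofReal_zero, zero_add, ofReal_one] at cauchy
  unfold airyContour
  linear_combination I * cauchy + ((∫ u in (-T)..T, airyIntegrand x (u * I))
    - ∫ u in (-T)..T, airyIntegrand x (1 + u * I)) * I_mul_I

lemma airyIntegrand_mul_I_add_airyIntegrand_neg_mul_I (x u : ℝ) :
    airyIntegrand x (u * I) + airyIntegrand x ((-u : ℝ) * I) =
      (2 * Real.cos (u ^ 3 / 3 + u * x) : ℝ) := by
  push_cast
  rw [two_cos, add_comm, airyIntegrand, airyIntegrand, mul_pow, mul_pow, I_pow_three]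
  ring_nf

lemma integral_airyIntegrand_mul_I_eq_integral_cos (x T : ℝ) :
    ∫ u in (-T)..T, airyIntegrand x (u * I) =
      (2 * ∫ s in (0 : ℝ)..T, Real.cos (s ^ 3 / 3 + s * x) : ℝ) := by
  have continuous_integrand : Continuous fun u : ℝ => airyIntegrand x (u * I) :=
    (continuous_airyIntegrand x).comp (by fun_prop)
  have reflect : ∫ u in (-T)..0, airyIntegrand x (u * I) =
      ∫ u in 0..T, airyIntegrand x ((-u : ℝ) * I) := by
    rw [intervalIntegral.integral_comp_neg (fun u : ℝ => airyIntegrand x (u * I)), neg_zero]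
  have continuous_reflected : Continuous fun u : ℝ => airyIntegrand x ((-u : ℝ) * I) :=
    continuous_integrand.comp continuous_neg
  rw [← intervalIntegral.integral_add_adjacent_intervals
      (continuous_integrand.intervalIntegrable (-T) 0)
      (continuous_integrand.intervalIntegrable 0 T), reflect, add_comm,
    ← intervalIntegral.integral_add (continuous_integrand.intervalIntegrable _ _)
      (continuous_reflected.intervalIntegrable _ _),
    ← intervalIntegral.integral_const_mul, ← intervalIntegral.integral_ofReal]
  simp only [airyIntegrand_mul_I_add_airyIntegrand_neg_mul_I]

lemma tendsto_integral_cos_airy (x : ℝ) :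
    Tendsto (fun T : ℝ => ((2 * ∫ s in (0 : ℝ)..T, Real.cos (s ^ 3 / 3 + s * x) : ℝ) : ℂ)) atTop
      (𝓝 (∫ u, airyIntegrand x (airyContour u))) := by
  have vertical := intervalIntegral_tendsto_integral (integrable_airyIntegrand_airyContour x)
    tendsto_neg_atTop_atBot tendsto_id
  have top := tendsto_integral_airyIntegrand_horizontal x (T := id)
    (tendsto_pow_atTop two_ne_zero)
  have bottom := tendsto_integral_airyIntegrand_horizontal x (T := fun T => -T)
    (by simpa only [neg_sq] using tendsto_pow_atTop two_ne_zero)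
  have total := vertical.sub ((bottom.sub top).const_mul I)
  rw [sub_zero, mul_zero, sub_zero] at total
  refine total.congr fun T => ?_
  rw [← integral_airyIntegrand_mul_I_eq_integral_cos, integral_airyIntegrand_mul_I]
  rfl

lemma ofReal_Ai (x : ℝ) :
    (Ai x : ℂ) = (2 * π : ℂ)⁻¹ * ∫ u, airyIntegrand x (airyContour u) := by
  set A := ∫ u, airyIntegrand x (airyContour u)
  have tendsto_A := tendsto_integral_cos_airy x
  have A_real : A = A.re := by
    have im_tendsto := (continuous_im.tendsto A).comp tendsto_A
    simp only [Function.comp_def, ofReal_im] at im_tendsto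
    exact Complex.ext rfl (tendsto_nhds_unique im_tendsto tendsto_const_nhds)
  have improper_integral : Tendsto (fun T : ℝ => ∫ s in (0 : ℝ)..T,
      Real.cos (s ^ 3 / 3 + s * x)) atTop (𝓝 (A.re / 2)) := by
    refine (((continuous_re.tendsto A).comp tendsto_A).div_const 2).congr fun T => ?_
    simp only [Function.comp_apply, ofReal_re]
    ring
  rw [Ai, improper_integral.limUnder_eq, A_real]
  push_cast
  rw [ofReal_re]
  ring

lemma ofReal_deriv_Ai (x : ℝ) :
    ((deriv Ai x : ℝ) : ℂ) =
      (2 * π : ℂ)⁻¹ * ∫ u, -airyContour u * airyIntegrand x (airyContour u) := by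
  set D := (2 * π : ℂ)⁻¹ * ∫ u, -airyContour u * airyIntegrand x (airyContour u)
  have hasDerivAt_ofReal_Ai : HasDerivAt (fun x => (Ai x : ℂ)) D x := by
    simpa only [ofReal_Ai] using (hasDerivAt_integral_airyIntegrand x).const_mul (2 * π : ℂ)⁻¹
  have hasDerivAt_Ai : HasDerivAt Ai D.re x := by
    simpa [Function.comp_def] using
      reCLM.hasFDerivAt.comp_hasDerivAt x hasDerivAt_ofReal_Ai
  rw [hasDerivAt_Ai.deriv]
  exact hasDerivAt_Ai.ofReal_comp.unique hasDerivAt_ofReal_Ai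

end Airy

section Edge

/-- The integrand of the rescaled integral for `L * J_N(2 * L ^ 3)`, which arises from the circle
of radius `exp (1 / L)` with angle `u / L`. -/
noncomputable def edgeIntegrand (L : ℝ) (N : ℤ) (u : ℝ) : ℂ :=
  exp (2 * L ^ 3 * sinh (airyContour u / L) - N * (airyContour u / L))

lemma continuous_edgeIntegrand (L : ℝ) (N : ℤ) : Continuous (edgeIntegrand L N) := by
  unfold edgeIntegrand
  fun_prop

lemma edgeIntegrand_add_one (L : ℝ) (N : ℤ) (u : ℝ) :
    edgeIntegrand L (N + 1) u = exp (-(airyContour u / L)) * edgeIntegrand L N u := by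
  rw [edgeIntegrand, edgeIntegrand, ← exp_add]
  push_cast
  ring_nf

lemma airyContour_div (u L : ℝ) : airyContour u / L = (1 / L : ℝ) + (u / L : ℝ) * I := by
  rw [airyContour]
  push_cast
  ring

lemma mul_besselJ_eq_integral_edgeIntegrand (N : ℤ) {L : ℝ} (hL : L ≠ 0) :
    L * besselJ N (2 * L ^ 3) =
      (2 * π : ℂ)⁻¹ * ∫ u in (-(π * L))..(π * L), edgeIntegrand L N u := by
  simp only [edgeIntegrand, airyContour_div]
  rw [intervalIntegral.integral_comp_div (fun θ : ℝ => exp (2 * L ^ 3 *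
      sinh ((1 / L : ℝ) + θ * I) - N * ((1 / L : ℝ) + θ * I))) hL, neg_div,
    mul_div_cancel_right₀ _ hL, real_smul, besselJ_eq_integral_exp_sinh N _ (1 / L)]
  ring

lemma sq_mul_besselJ_add_one_sub_besselJ (N : ℤ) {L : ℝ} (hL : L ≠ 0) :
    L ^ 2 * (besselJ (N + 1) (2 * L ^ 3) - besselJ N (2 * L ^ 3)) =
      (2 * π : ℂ)⁻¹ * ∫ u in (-(π * L))..(π * L),
        L * (exp (-(airyContour u / L)) - 1) * edgeIntegrand L N u := by
  have integral_sub : ∫ u in (-(π * L))..(π * L),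
      L * (exp (-(airyContour u / L)) - 1) * edgeIntegrand L N u =
      L * ((∫ u in (-(π * L))..(π * L), edgeIntegrand L (N + 1) u)
        - ∫ u in (-(π * L))..(π * L), edgeIntegrand L N u) := by
    rw [← intervalIntegral.integral_sub ((continuous_edgeIntegrand _ _).intervalIntegrable _ _)
      ((continuous_edgeIntegrand _ _).intervalIntegrable _ _),
      ← intervalIntegral.integral_const_mul]
    simp only [edgeIntegrand_add_one, mul_assoc, sub_mul, one_mul]
  rw [integral_sub]
  linear_combination L * (mul_besselJ_eq_integral_edgeIntegrand (N + 1) hL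
    - mul_besselJ_eq_integral_edgeIntegrand N hL)

lemma two_mul_cube_mul_sinh_mul_cos_le {L u : ℝ} (hL : 1 ≤ L) (hu : |u| ≤ π * L) :
    2 * L ^ 3 * (Real.sinh (1 / L) * Real.cos (u / L)) ≤
      2 * L ^ 2 + 4 - 4 / π ^ 2 * u ^ 2 := by
  have L_pos : 0 < L := one_pos.trans_le hL
  have inv_nonneg : 0 ≤ 1 / L := by positivity
  have sinh_le := sinh_le_self_add_two_mul_cube inv_nonneg ((div_le_one L_pos).2 hL)
  have le_sinh : 1 / L ≤ Real.sinh (1 / L) := Real.self_le_sinh_iff.2 inv_nonneg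
  have cos_le : Real.cos (u / L) ≤ 1 - 2 / π ^ 2 * (u / L) ^ 2 :=
    Real.cos_le_one_sub_mul_cos_sq (by rwa [abs_div, abs_of_pos L_pos, div_le_iff₀ L_pos])
  calc 2 * L ^ 3 * (Real.sinh (1 / L) * Real.cos (u / L))
      ≤ 2 * L ^ 3 * (Real.sinh (1 / L) * (1 - 2 / π ^ 2 * (u / L) ^ 2)) := by
        gcongr
    _ = 2 * L ^ 3 * (Real.sinh (1 / L) - Real.sinh (1 / L) * (2 / π ^ 2 * (u / L) ^ 2)) := by
        ring
    _ ≤ 2 * L ^ 3 * ((1 / L + 2 * (1 / L) ^ 3) - 1 / L * (2 / π ^ 2 * (u / L) ^ 2)) := by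
        gcongr
    _ = 2 * L ^ 2 + 4 - 4 / π ^ 2 * u ^ 2 := by
        field_simp
        ring

lemma norm_edgeIntegrand (L : ℝ) (N : ℤ) (u : ℝ) :
    ‖edgeIntegrand L N u‖ =
      Real.exp (2 * L ^ 3 * (Real.sinh (1 / L) * Real.cos (u / L)) - N / L) := by
  have exponent_eq : 2 * (L : ℂ) ^ 3 * sinh (airyContour u / L) - N * (airyContour u / L) =
      (2 * L ^ 3 : ℝ) * sinh ((1 / L : ℝ) + (u / L : ℝ) * I)
        - (N : ℝ) * ((1 / L : ℝ) + (u / L : ℝ) * I) := by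
    rw [airyContour_div]
    push_cast
    rfl
  rw [edgeIntegrand, norm_exp, exponent_eq, sub_re, re_ofReal_mul, re_ofReal_mul,
    re_sinh_ofReal_add_mul_I, add_re, ofReal_re, re_ofReal_mul, I_re]
  ring_nf

lemma norm_edgeIntegrand_le {L m u : ℝ} {N : ℤ} (hL : 1 ≤ L) (hu : |u| ≤ π * L)
    (hm : m ≤ (N - 2 * L ^ 3) / L) :
    ‖edgeIntegrand L N u‖ ≤ Real.exp (4 - m) * Real.exp (-(4 / π ^ 2) * u ^ 2) := by
  have scaled_eq : ((N : ℝ) - 2 * L ^ 3) / L = N / L - 2 * L ^ 2 := by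
    field_simp
  rw [norm_edgeIntegrand, ← Real.exp_add, Real.exp_le_exp]
  linarith [two_mul_cube_mul_sinh_mul_cos_le hL hu]

lemma norm_mul_exp_neg_airyContour_div_sub_one_le {L u : ℝ} (hL : 1 ≤ L) (hu : |u| ≤ π * L) :
    ‖L * (exp (-(airyContour u / L)) - 1)‖ ≤ Real.exp (1 + π) * (1 + |u|) := by
  have L_pos : 0 < L := one_pos.trans_le hL
  have norm_div_eq : ‖-(airyContour u / L)‖ = ‖airyContour u‖ / L := by
    rw [norm_neg, norm_div, norm_real, Real.norm_of_nonneg L_pos.le]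
  have norm_div_le : ‖airyContour u‖ / L ≤ 1 + π := by
    rw [div_le_iff₀ L_pos]
    linarith [norm_airyContour_le u]
  have exp_sub_one_le := norm_exp_sub_one_le_norm_mul_exp_norm (-(airyContour u / L))
  rw [norm_div_eq] at exp_sub_one_le
  rw [norm_mul, norm_real, Real.norm_of_nonneg L_pos.le]
  calc L * ‖exp (-(airyContour u / L)) - 1‖
      ≤ L * (‖airyContour u‖ / L * Real.exp (‖airyContour u‖ / L)) := by gcongr
    _ = Real.exp (‖airyContour u‖ / L) * ‖airyContour u‖ := by field_simp
    _ ≤ Real.exp (1 + π) * (1 + |u|) := by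
        gcongr
        exact norm_airyContour_le u

variable {ι : Type*} {l : Filter ι} {L : ι → ℝ}

lemma tendsto_mul_exp_neg_div_sub_one (hL : Tendsto L l atTop) (w : ℂ) :
    Tendsto (fun i => L i * (exp (-(w / L i)) - 1)) l (𝓝 (-w)) := by
  have hasDerivAt_exp : HasDerivAt (fun t : ℝ => exp (-(w * t))) (-w) 0 := by
    have exponent : HasDerivAt (fun t : ℝ => -(w * t)) (-(w * 1)) 0 :=
      (ofRealCLM.hasDerivAt.const_mul w).neg
    simpa using exponent.cexp
  refine (hasDerivAt_exp.tendsto_slope_zero_right.comp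
    (tendsto_inv_atTop_nhdsGT_zero.comp hL)).congr fun i => ?_
  simp [div_eq_mul_inv]

lemma tendsto_cube_mul_sinh_div_remainder (hL : Tendsto L l atTop) (w : ℂ) :
    Tendsto (fun i => (L i : ℂ) ^ 3 * (sinh (w / L i) - w / L i - (w / L i) ^ 3 / 6)) l
      (𝓝 0) := by
  have bound_tendsto : Tendsto (fun i => ‖w‖ ^ 4 * (L i)⁻¹) l (𝓝 0) := by
    simpa using (tendsto_inv_atTop_zero.comp hL).const_mul (‖w‖ ^ 4)
  refine squeeze_zero_norm' ?_ bound_tendsto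
  filter_upwards [hL.eventually_gt_atTop 0, hL.eventually_ge_atTop ‖w‖] with i L_pos norm_le
  have norm_div_eq : ‖w / L i‖ = ‖w‖ / L i := by
    rw [norm_div, norm_real, Real.norm_of_nonneg L_pos.le]
  have taylor := norm_sinh_sub_self_sub_cube_le (z := w / L i)
    (norm_div_eq.trans_le ((div_le_one L_pos).2 norm_le))
  rw [norm_div_eq] at taylor
  rw [norm_mul, norm_pow, norm_real, Real.norm_of_nonneg L_pos.le]
  calc L i ^ 3 * ‖sinh (w / L i) - w / L i - (w / L i) ^ 3 / 6‖
      ≤ L i ^ 3 * (‖w‖ / L i) ^ 4 := by gcongr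
    _ = ‖w‖ ^ 4 * (L i)⁻¹ := by field_simp

variable {N : ι → ℤ} {x : ℝ}

lemma tendsto_edgeIntegrand (hL : Tendsto L l atTop)
    (hN : Tendsto (fun i => (N i - 2 * L i ^ 3) / L i) l (𝓝 x)) (u : ℝ) :
    Tendsto (fun i => edgeIntegrand (L i) (N i) u) l (𝓝 (airyIntegrand x (airyContour u))) := by
  refine (continuous_exp.tendsto _).comp ?_
  set w := airyContour u
  have linear_tendsto : Tendsto (fun i => (((N i - 2 * L i ^ 3) / L i : ℝ) : ℂ) * w) l
      (𝓝 (x * w)) :=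
    ((continuous_ofReal.tendsto x).comp hN).mul_const w
  have exponent_tendsto := (((tendsto_cube_mul_sinh_div_remainder hL w).const_mul 2).add_const
    (w ^ 3 / 3)).sub linear_tendsto
  rw [mul_zero, zero_add] at exponent_tendsto
  refine exponent_tendsto.congr' ?_
  filter_upwards [hL.eventually_ne_atTop 0] with i L_ne
  have ofReal_L_ne : (L i : ℂ) ≠ 0 := ofReal_ne_zero.2 L_ne
  push_cast
  field_simp
  ring

variable [l.IsCountablyGenerated]

lemma tendsto_integral_mul_edgeIntegrand (hL : Tendsto L l atTop)
    (hN : Tendsto (fun i => (N i - 2 * L i ^ 3) / L i) l (𝓝 x))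
    {P : ι → ℝ → ℂ} {Q : ℝ → ℂ} {K : ℝ} (hK : 0 ≤ K) (hP : ∀ i, Continuous (P i))
    (hPK : ∀ᶠ i in l, ∀ u, |u| ≤ π * L i → ‖P i u‖ ≤ K * (1 + |u|))
    (hPQ : ∀ u, Tendsto (fun i => P i u) l (𝓝 (Q u))) :
    Tendsto (fun i => ∫ u in (-(π * L i))..(π * L i), P i u * edgeIntegrand (L i) (N i) u) l
      (𝓝 (∫ u, Q u * airyIntegrand x (airyContour u))) := by
  set truncated : ι → ℝ → ℂ := fun i =>
    (Set.Ioc (-(π * L i)) (π * L i)).indicator fun u => P i u * edgeIntegrand (L i) (N i) u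
  have integral_truncated : ∀ᶠ i in l, ∫ u, truncated i u =
      ∫ u in (-(π * L i))..(π * L i), P i u * edgeIntegrand (L i) (N i) u := by
    filter_upwards [hL.eventually_ge_atTop 0] with i L_nonneg
    rw [intervalIntegral.integral_of_le (neg_le_self (by positivity)),
      integral_indicator measurableSet_Ioc]
  refine Tendsto.congr' integral_truncated ?_
  refine tendsto_integral_filter_of_dominated_convergence
    (fun u => K * Real.exp (4 - (x - 1)) * ((1 + |u|) * Real.exp (-(4 / π ^ 2) * u ^ 2)))
    (.of_forall fun i => ?_) ?_
    ((integrable_one_add_abs_mul_exp_neg_mul_sq (by positivity)).const_mul _)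
    (.of_forall fun u => ?_)
  · exact (((hP i).mul (continuous_edgeIntegrand _ _)).aestronglyMeasurable).indicator
      measurableSet_Ioc
  · filter_upwards [hN.eventually_const_le (sub_one_lt x), hPK, hL.eventually_ge_atTop 1]
      with i le_scaled norm_P_le one_le_L
    refine .of_forall fun u => ?_
    rw [norm_indicator_eq_indicator_norm]
    refine Set.indicator_apply_le' (fun hu => ?_) fun _ => by positivity
    have abs_le_L : |u| ≤ π * L i := abs_le.2 ⟨hu.1.le, hu.2⟩
    rw [norm_mul, mul_mul_mul_comm]
    gcongr
    · exact norm_P_le u abs_le_L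
    · exact norm_edgeIntegrand_le one_le_L abs_le_L le_scaled
  · refine ((hPQ u).mul (tendsto_edgeIntegrand hL hN u)).congr' ?_
    filter_upwards [(hL.const_mul_atTop Real.pi_pos).eventually_gt_atTop |u|] with i abs_lt_L
    have mem_Ioc : u ∈ Set.Ioc (-(π * L i)) (π * L i) :=
      Set.Ioo_subset_Ioc_self (abs_lt.1 abs_lt_L)
    simp only [truncated, Set.indicator_of_mem mem_Ioc]

lemma tendsto_mul_besselJ (hL : Tendsto L l atTop)
    (hN : Tendsto (fun i => (N i - 2 * L i ^ 3) / L i) l (𝓝 x)) :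
    Tendsto (fun i => L i * besselJ (N i) (2 * L i ^ 3)) l (𝓝 (Ai x)) := by
  have integral_tendsto := tendsto_integral_mul_edgeIntegrand hL hN (P := fun _ _ => 1)
    (Q := fun _ => 1) zero_le_one (fun _ => continuous_const)
    (.of_forall fun _ _ _ => by simp) fun _ => tendsto_const_nhds
  simp only [one_mul] at integral_tendsto
  rw [ofReal_Ai]
  refine (integral_tendsto.const_mul (2 * π : ℂ)⁻¹).congr' ?_
  filter_upwards [hL.eventually_ne_atTop 0] with i L_ne
  exact (mul_besselJ_eq_integral_edgeIntegrand (N i) L_ne).symm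

lemma tendsto_sq_mul_besselJ_add_one_sub_besselJ (hL : Tendsto L l atTop)
    (hN : Tendsto (fun i => (N i - 2 * L i ^ 3) / L i) l (𝓝 x)) :
    Tendsto (fun i => L i ^ 2 * (besselJ (N i + 1) (2 * L i ^ 3) - besselJ (N i) (2 * L i ^ 3))) l
      (𝓝 ((deriv Ai x : ℝ) : ℂ)) := by
  have integral_tendsto := tendsto_integral_mul_edgeIntegrand hL hN
    (P := fun i u => L i * (exp (-(airyContour u / L i)) - 1)) (Real.exp_nonneg (1 + π))
    (fun i => by fun_prop)
    ((hL.eventually_ge_atTop 1).mono fun _ one_le_L _ =>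
      norm_mul_exp_neg_airyContour_div_sub_one_le one_le_L)
    fun u => tendsto_mul_exp_neg_div_sub_one hL (airyContour u)
  rw [ofReal_deriv_Ai]
  refine (integral_tendsto.const_mul (2 * π : ℂ)⁻¹).congr' ?_
  filter_upwards [hL.eventually_ne_atTop 0] with i L_ne
  exact (sq_mul_besselJ_add_one_sub_besselJ (N i) L_ne).symm

end Edge

section KernelLimit

lemma ofReal_KAiry_of_ne {x y : ℝ} (hxy : x ≠ y) :
    (KAiry x y : ℂ) =
      (Ai x * (deriv Ai y : ℝ) - (deriv Ai x : ℝ) * Ai y) / (x - y : ℝ) := by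
  rw [KAiry, if_neg hxy]
  push_cast
  rfl

lemma mul_besselKernel_pow_six {a b : ℤ} {L : ℝ} (hL : 0 < L) (hab : a ≠ b) :
    L * besselKernel a b (L ^ 6) =
      (L * besselJ a (2 * L ^ 3) *
          (L ^ 2 * (besselJ (b + 1) (2 * L ^ 3) - besselJ b (2 * L ^ 3)))
        - L ^ 2 * (besselJ (a + 1) (2 * L ^ 3) - besselJ a (2 * L ^ 3)) *
          (L * besselJ b (2 * L ^ 3))) / ((a - b) / L : ℝ) := by
  have sqrt_eq : √(L ^ 6) = L ^ 3 := by
    rw [show L ^ 6 = (L ^ 3) ^ 2 by ring, Real.sqrt_sq (by positivity)]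
  have christoffel_darboux := sub_mul_besselKernel a b (L ^ 6)
  rw [sqrt_eq] at christoffel_darboux
  have ofReal_L_ne : (L : ℂ) ≠ 0 := ofReal_ne_zero.2 hL.ne'
  have sub_ne : (a - b : ℂ) ≠ 0 := sub_ne_zero.2 (Int.cast_injective.ne hab)
  push_cast at christoffel_darboux ⊢
  rw [eq_div_iff (div_ne_zero sub_ne ofReal_L_ne), mul_div_assoc', div_eq_iff ofReal_L_ne]
  linear_combination L * christoffel_darboux

lemma tendsto_sub_two_mul_cube_div_of_tendsto_add_half {ι : Type*} {l : Filter ι} {ξ : ι → ℝ}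
    {c : ι → ℤ} {x : ℝ} (hξ : Tendsto ξ l atTop)
    (hc : Tendsto (fun i => (c i + 1 / 2 - 2 * √(ξ i)) / ξ i ^ ((1 : ℝ) / 6)) l (𝓝 x)) :
    Tendsto (fun i => (c i - 2 * (ξ i ^ ((1 : ℝ) / 6)) ^ 3) / ξ i ^ ((1 : ℝ) / 6)) l (𝓝 x) := by
  have shift_tendsto : Tendsto (fun i => (1 / 2) / ξ i ^ ((1 : ℝ) / 6)) l (𝓝 0) :=
    ((tendsto_rpow_atTop (by norm_num)).comp hξ).const_div_atTop (1 / 2)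
  have sub_tendsto := hc.sub shift_tendsto
  rw [sub_zero] at sub_tendsto
  refine sub_tendsto.congr' ?_
  filter_upwards [hξ.eventually_ge_atTop 0] with i ξ_nonneg
  have cube_eq : (ξ i ^ ((1 : ℝ) / 6)) ^ 3 = √(ξ i) := by
    rw [Real.sqrt_eq_rpow, ← Real.rpow_mul_natCast ξ_nonneg]
    norm_num
  rw [cube_eq]
  ring

variable {ι : Type*} {l : Filter ι} [l.IsCountablyGenerated] {x y : ℝ} {a b : ι → ℤ}

lemma tendsto_mul_besselKernel_pow_six (hxy : x ≠ y) {L : ι → ℝ} (hL : Tendsto L l atTop)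
    (ha : Tendsto (fun i => (a i - 2 * L i ^ 3) / L i) l (𝓝 x))
    (hb : Tendsto (fun i => (b i - 2 * L i ^ 3) / L i) l (𝓝 y)) :
    Tendsto (fun i => L i * besselKernel (a i) (b i) (L i ^ 6)) l (𝓝 (KAiry x y)) := by
  have sub_tendsto : Tendsto (fun i => ((a i - b i) / L i : ℝ)) l (𝓝 (x - y)) :=
    (ha.sub hb).congr fun i => by ring
  have ratio_tendsto := (((tendsto_mul_besselJ hL ha).mul
      (tendsto_sq_mul_besselJ_add_one_sub_besselJ hL hb)).sub
    ((tendsto_sq_mul_besselJ_add_one_sub_besselJ hL ha).mul (tendsto_mul_besselJ hL hb))).div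
    ((continuous_ofReal.tendsto _).comp sub_tendsto) (ofReal_ne_zero.2 (sub_ne_zero.2 hxy))
  rw [ofReal_KAiry_of_ne hxy]
  refine ratio_tendsto.congr' ?_
  filter_upwards [hL.eventually_gt_atTop 0, sub_tendsto.eventually_ne (sub_ne_zero.2 hxy)]
    with i L_pos ratio_ne
  refine (mul_besselKernel_pow_six L_pos fun a_eq_b => ratio_ne ?_).symm
  rw [a_eq_b, sub_self, zero_div]

theorem besselKernel_tendsto_airy_kernel_general (hxy : x ≠ y) {ξ : ι → ℝ}
    (hξ : Tendsto ξ l atTop)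
    (ha : Tendsto (fun i => (a i + 1 / 2 - 2 * √(ξ i)) / ξ i ^ ((1 : ℝ) / 6)) l (𝓝 x))
    (hb : Tendsto (fun i => (b i + 1 / 2 - 2 * √(ξ i)) / ξ i ^ ((1 : ℝ) / 6)) l (𝓝 y)) :
    Tendsto (fun i => ((ξ i ^ ((1 : ℝ) / 6) : ℝ) : ℂ) * besselKernel (a i) (b i) (ξ i)) l
      (𝓝 (KAiry x y)) := by
  refine (tendsto_mul_besselKernel_pow_six hxy
    ((tendsto_rpow_atTop (by norm_num : (0 : ℝ) < 1 / 6)).comp hξ)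
    (tendsto_sub_two_mul_cube_div_of_tendsto_add_half hξ ha)
    (tendsto_sub_two_mul_cube_div_of_tendsto_add_half hξ hb)).congr' ?_
  filter_upwards [hξ.eventually_ge_atTop 0] with i ξ_nonneg
  have pow_six : (ξ i ^ ((1 : ℝ) / 6)) ^ 6 = ξ i := by
    rw [← Real.rpow_mul_natCast ξ_nonneg]
    norm_num
  simp only [Function.comp_apply, pow_six]

end KernelLimit

/-- Edge asymptotics of the discrete Bessel kernel: the Airy kernel.
Half-integers `aₙ + 1/2`, `bₙ + 1/2` are encoded by the integers `aₙ`, `bₙ`. -/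
theorem besselKernel_tendsto_airy_kernel
    (x y : ℝ) (hxy : x ≠ y)
    (ξ : ℕ → ℝ) (hpos : ∀ n, 0 < ξ n) (hξ : Tendsto ξ atTop atTop)
    (a b : ℕ → ℤ)
    (ha : Tendsto
      (fun n => ((a n : ℝ) + 1/2 - 2 * Real.sqrt (ξ n)) / (ξ n) ^ ((1 : ℝ) / 6))
      atTop (𝓝 x))
    (hb : Tendsto
      (fun n => ((b n : ℝ) + 1/2 - 2 * Real.sqrt (ξ n)) / (ξ n) ^ ((1 : ℝ) / 6))
      atTop (𝓝 y)) :
    Tendsto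
      (fun n => (((ξ n) ^ ((1 : ℝ) / 6) : ℝ) : ℂ) * besselKernel (a n) (b n) (ξ n))
      atTop (𝓝 ((KAiry x y : ℝ) : ℂ)) :=
  besselKernel_tendsto_airy_kernel_general hxy hξ ha hb
end
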